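/- (Quasi-stability estimate.) Assume f₁,f₂,f₃ ∈ C¹(ℝ³) with |∇f_i(u,v,w)| ≤ c_f(1+|u|^{p−1}+|v|^{p−1}+|w|^{p−1}) for some c_f > 0, p ≥ 1; g₁,g₂,g₃ ∈ C¹(ℝ) monotone increasing with g_i(0) = 0 and m ≤ g_i' ≤ M for constants 0 < m ≤ M; and a₁,a₂,a₃ ∈ L^∞(0,L) nonnegative with a_i(x) ≥ a₀ > 0 on open intervals I_i ⊂ [0,L] such that (L₁,L₂) := I₁ ∩ I₂ ∩ I₃ ≠ ∅. Let R > 0. Then there exist constants c₁ > 0 and ω > 0, depending only on R and the data, such that for any two C² classical solutions Z¹, Z² of the semilinear Bresse system with localized damping on [0,L]×[0,∞) satisfying ∥Z^i(t)∥_H ≤ R for all t ≥ 0, the differences φ̃ = φ¹−φ², ψ̃ = ψ¹−ψ², w̃ = w¹−w² satisfy for all t ≥ 0: ∥Z¹(t) − Z²(t)∥²_H ≤ c₁ e^{−ωt} ∥Z¹(0) − Z²(0)∥²_H + c₁ sup_{σ ∈ [0,t]} ( ∥φ̃(σ)∥²_{L^{2p}(0,L)} + ∥ψ̃(σ)∥²_{L^{2p}(0,L)}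 + ∥w̃(σ)∥²_{L^{2p}(0,L)} ). -/

import Mathlib

open MeasureTheory

/-- The squared `H`-norm
`∥Z(t)∥²_H = ρ₁∥φ_t∥² + ρ₂∥ψ_t∥² + ρ₁∥w_t∥² + b∥ψ_x∥² + k∥φ_x+ψ+ℓw∥² + k₀∥w_x−ℓφ∥²`
of the state of the Bresse system at time `t`, where `∥·∥` is the `L²(0,L)`-norm. -/
noncomputable def HnormSq (ρ₁ ρ₂ b k k₀ ℓ L : ℝ) (φ ψ w : ℝ → ℝ → ℝ) (t : ℝ) : ℝ :=
  ρ₁ * (∫ x in (0:ℝ)..L, (deriv (fun s => φ x s) t) ^ 2)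
  + ρ₂ * (∫ x in (0:ℝ)..L, (deriv (fun s => ψ x s) t) ^ 2)
  + ρ₁ * (∫ x in (0:ℝ)..L, (deriv (fun s => w x s) t) ^ 2)
  + b * (∫ x in (0:ℝ)..L, (deriv (fun y => ψ y t) x) ^ 2)
  + k * (∫ x in (0:ℝ)..L, (deriv (fun y => φ y t) x + ψ x t + ℓ * w x t) ^ 2)
  + k₀ * (∫ x in (0:ℝ)..L, (deriv (fun y => w y t) x - ℓ * φ x t) ^ 2)

/-- `(φ,ψ,w)` is a classical solution, of class `C^N`, of the semilinear Bresse
system with localized damping on `[0,L] × [0,∞)`, with Dirichlet boundary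
conditions. -/
def IsBresseSolutionInfty (N : ℕ) (ρ₁ ρ₂ k k₀ b ℓ L : ℝ)
    (a₁ a₂ a₃ g₁ g₂ g₃ : ℝ → ℝ) (f₁ f₂ f₃ : ℝ → ℝ → ℝ → ℝ)
    (φ ψ w : ℝ → ℝ → ℝ) : Prop :=
  ContDiff ℝ N (fun z : ℝ × ℝ => φ z.1 z.2) ∧
  ContDiff ℝ N (fun z : ℝ × ℝ => ψ z.1 z.2) ∧
  ContDiff ℝ N (fun z : ℝ × ℝ => w z.1 z.2) ∧
  (∀ t ∈ Set.Ici (0:ℝ),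
    φ 0 t = 0 ∧ φ L t = 0 ∧ ψ 0 t = 0 ∧ ψ L t = 0 ∧ w 0 t = 0 ∧ w L t = 0) ∧
  (∀ x ∈ Set.Icc (0:ℝ) L, ∀ t ∈ Set.Ici (0:ℝ),
    (ρ₁ * deriv (deriv (fun s => φ x s)) t
      - k * deriv (fun y => deriv (fun y' => φ y' t) y + ψ y t + ℓ * w y t) x
      - k₀ * ℓ * (deriv (fun y => w y t) x - ℓ * φ x t)
      + a₁ x * g₁ (deriv (fun s => φ x s) t)
      + f₁ (φ x t) (ψ x t) (w x t) = 0) ∧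
    (ρ₂ * deriv (deriv (fun s => ψ x s)) t
      - b * deriv (fun y => deriv (fun y' => ψ y' t) y) x
      + k * (deriv (fun y => φ y t) x + ψ x t + ℓ * w x t)
      + a₂ x * g₂ (deriv (fun s => ψ x s) t)
      + f₂ (φ x t) (ψ x t) (w x t) = 0) ∧
    (ρ₁ * deriv (deriv (fun s => w x s)) t
      - k₀ * deriv (fun y => deriv (fun y' => w y' t) y - ℓ * φ y t) x
      + k * ℓ * (deriv (fun y => φ y t) x + ψ x t + ℓ * w x t)
      + a₃ x * g₃ (deriv (fun s => w x s) t)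
      + f₃ (φ x t) (ψ x t) (w x t) = 0))

/-!
The difference of two bounded solutions solves a linear wave system: the bound in `H` controls the
displacements uniformly, so the force difference is `O(|ũ|)`, and the damping difference is
`e ∂ₜũ` with `e ≥ d > 0` on the damped region. Expanding the shear and axial forces, the only
first-order coupling left is skew-symmetric.

Choose `q` vanishing at `0` and `L` with `q' = 1 - ξ`, where the bump `ξ` is supported in the damped
region. The multiplier `q ∂ₓũ` produces minus the energy density times `1 - ξ`, since skew symmetry
cancels the coupling and `q` removes the boundary terms; the multiplier `ξ ũ` recovers the missing
energy density on the support of `ξ` at the cost of `∥∂ₜũ∥²` there, which the damping pays for.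
Adding both to a large multiple of the energy gives a Lyapunov function `V` equivalent to the energy
up to `∥ũ∥²_{L²}` with `V' ≤ -ω V + C ∥ũ∥²_{L²}`. Grönwall's inequality and Jensen's inequality
`∥ũ∥²_{L²} ≤ L^{1 - 1/p} ∥ũ∥²_{L^{2p}}` conclude.
-/

noncomputable section

open Filter Set Topology

/-- The partial derivative in the space variable, the first coordinate of `(x, t)`. -/
def partialX (u : ℝ × ℝ → ℝ) (z : ℝ × ℝ) : ℝ := deriv (fun y => u (y, z.2)) z.1

/-- The partial derivative in the time variable, the second coordinate of `(x, t)`. -/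
def partialT (u : ℝ × ℝ → ℝ) (z : ℝ × ℝ) : ℝ := deriv (fun s => u (z.1, s)) z.2

local notation "∂ₓ" => partialX
local notation "∂ₜ" => partialT

section

variable {u v : ℝ × ℝ → ℝ}

theorem hasDerivAt_fderiv_fst (hu : Differentiable ℝ u) (x t : ℝ) :
    HasDerivAt (fun y => u (y, t)) (fderiv ℝ u (x, t) (1, 0)) x :=
  (hu (x, t)).hasFDerivAt.comp_hasDerivAt x ((hasDerivAt_id x).prodMk (hasDerivAt_const x t))

theorem hasDerivAt_fderiv_snd (hu : Differentiable ℝ u) (x t : ℝ) :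
    HasDerivAt (fun s => u (x, s)) (fderiv ℝ u (x, t) (0, 1)) t :=
  (hu (x, t)).hasFDerivAt.comp_hasDerivAt t ((hasDerivAt_const t x).prodMk (hasDerivAt_id t))

theorem partialX_eq_fderiv (hu : Differentiable ℝ u) : ∂ₓ u = fun z => fderiv ℝ u z (1, 0) :=
  funext fun z => (hasDerivAt_fderiv_fst hu z.1 z.2).deriv

theorem partialT_eq_fderiv (hu : Differentiable ℝ u) : ∂ₜ u = fun z => fderiv ℝ u z (0, 1) :=
  funext fun z => (hasDerivAt_fderiv_snd hu z.1 z.2).deriv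

theorem hasDerivAt_partialX (hu : Differentiable ℝ u) (x t : ℝ) :
    HasDerivAt (fun y => u (y, t)) (∂ₓ u (x, t)) x := by
  simpa only [partialX_eq_fderiv hu] using hasDerivAt_fderiv_fst hu x t

theorem hasDerivAt_partialT (hu : Differentiable ℝ u) (x t : ℝ) :
    HasDerivAt (fun s => u (x, s)) (∂ₜ u (x, t)) t := by
  simpa only [partialT_eq_fderiv hu] using hasDerivAt_fderiv_snd hu x t

theorem partialX_sub (hu : Differentiable ℝ u) (hv : Differentiable ℝ v) :
    ∂ₓ (u - v) = ∂ₓ u - ∂ₓ v :=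
  funext fun z => ((hasDerivAt_partialX hu z.1 z.2).sub (hasDerivAt_partialX hv z.1 z.2)).deriv

theorem partialT_sub (hu : Differentiable ℝ u) (hv : Differentiable ℝ v) :
    ∂ₜ (u - v) = ∂ₜ u - ∂ₜ v :=
  funext fun z => ((hasDerivAt_partialT hu z.1 z.2).sub (hasDerivAt_partialT hv z.1 z.2)).deriv

theorem contDiff_partialX {m n : WithTop ℕ∞} (hu : ContDiff ℝ n u) (hmn : m + 1 ≤ n) :
    ContDiff ℝ m (∂ₓ u) := by
  rw [partialX_eq_fderiv (hu.differentiable (by rintro rfl; simp at hmn))]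
  exact (hu.fderiv_right hmn).clm_apply contDiff_const

theorem contDiff_partialT {m n : WithTop ℕ∞} (hu : ContDiff ℝ n u) (hmn : m + 1 ≤ n) :
    ContDiff ℝ m (∂ₜ u) := by
  rw [partialT_eq_fderiv (hu.differentiable (by rintro rfl; simp at hmn))]
  exact (hu.fderiv_right hmn).clm_apply contDiff_const

theorem partialX_partialT_comm (hu : ContDiff ℝ 2 u) : ∂ₓ (∂ₜ u) = ∂ₜ (∂ₓ u) := by
  have hdu : Differentiable ℝ u := hu.differentiable two_ne_zero
  have hdxu : Differentiable ℝ (∂ₓ u) :=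
    (contDiff_partialX hu one_add_one_eq_two.le).differentiable_one
  have hdtu : Differentiable ℝ (∂ₜ u) :=
    (contDiff_partialT hu one_add_one_eq_two.le).differentiable_one
  have hddu : Differentiable ℝ (fderiv ℝ u) :=
    (hu.fderiv_right one_add_one_eq_two.le).differentiable_one
  have fderiv_fderiv_apply (z a c : ℝ × ℝ) :
      fderiv ℝ (fun z => fderiv ℝ u z a) z c = fderiv ℝ (fderiv ℝ u) z c a := by
    simp [fderiv_clm_apply (hddu z) (differentiableAt_const a)]
  ext z
  rw [partialX_eq_fderiv hdtu, partialT_eq_fderiv hdxu, partialX_eq_fderiv hdu,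
    partialT_eq_fderiv hdu]
  simp only [fderiv_fderiv_apply]
  exact (hu.contDiffAt.isSymmSndFDerivAt (by simp)).eq (1, 0) (0, 1)

theorem hasDerivAt_integral_partialT (hu : ContDiff ℝ 1 u) (a b t : ℝ) :
    HasDerivAt (fun s => ∫ x in a..b, u (x, s)) (∫ x in a..b, ∂ₜ u (x, t)) t := by
  have hcu : Continuous u := hu.continuous
  have hctu : Continuous (∂ₜ u) := (contDiff_partialT hu (zero_add 1).le).continuous
  obtain ⟨B, hB⟩ := (isCompact_uIcc.prod isCompact_Icc).exists_bound_of_continuousOn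
    (s := uIcc a b ×ˢ Icc (t - 1) (t + 1)) hctu.continuousOn
  refine (intervalIntegral.hasDerivAt_integral_of_dominated_loc_of_deriv_le
    (F := fun s x => u (x, s)) (F' := fun s x => ∂ₜ u (x, s)) (bound := fun _ => B)
    (s := Icc (t - 1) (t + 1)) (Icc_mem_nhds (by linarith) (by linarith)) ?_ ?_ ?_ ?_ ?_ ?_).2
  · exact .of_forall fun s => Continuous.aestronglyMeasurable (by fun_prop)
  · exact Continuous.intervalIntegrable (by fun_prop) _ _
  · exact (hctu.comp (by fun_prop)).aestronglyMeasurable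
  · exact .of_forall fun x hx s hs => hB (x, s) ⟨uIoc_subset_uIcc hx, hs⟩
  · exact intervalIntegrable_const
  · exact .of_forall fun x _ s _ => hasDerivAt_partialT hu.differentiable_one x s

theorem integral_partialX (hu : ContDiff ℝ 1 u) (a b t : ℝ) :
    ∫ x in a..b, ∂ₓ u (x, t) = u (b, t) - u (a, t) :=
  intervalIntegral.integral_eq_sub_of_hasDerivAt
    (fun x _ => hasDerivAt_partialX hu.differentiable_one x t)
    (((contDiff_partialX hu (zero_add 1).le).continuous.comp
      (Continuous.prodMk_left t)).intervalIntegrable a b)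

theorem partialT_eq_zero_of_boundary (hu : Differentiable ℝ u) {x : ℝ}
    (hux : ∀ t, 0 ≤ t → u (x, t) = 0) {t : ℝ} (ht : 0 ≤ t) : ∂ₜ u (x, t) = 0 :=
  (uniqueDiffOn_Ici 0 t ht).eq_deriv _ (hasDerivAt_partialT hu x t).hasDerivWithinAt
    ((hasDerivWithinAt_const t (Ici 0) 0).congr hux (hux t ht))

end

/-- A multiplier for energy estimates on `[0, L]` with observation region `W`: `q` vanishes at
both endpoints and has slope `1` up to an error `ξ` which is supported in `W`. -/
structure IsLocalizedMultiplier (L : ℝ) (W : Set ℝ) (q ξ : ℝ → ℝ) : Prop where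
  contDiff : ContDiff ℝ 1 ξ
  hasDerivAt : ∀ x, HasDerivAt q (1 - ξ x) x
  left : q 0 = 0
  right : q L = 0
  eq_zero : ∀ x, x ∉ W → ξ x = 0

theorem exists_isLocalizedMultiplier {L : ℝ} {W : Set ℝ} (hW : IsOpen W) (hne : W.Nonempty)
    (hWL : W ⊆ Icc 0 L) : ∃ q ξ, IsLocalizedMultiplier L W q ξ := by
  obtain ⟨c, hc⟩ := hne
  obtain ⟨r, hr, hrW⟩ := Metric.isOpen_iff.1 hW c hc
  let bump : ContDiffBump c := ⟨r / 2, r, half_pos hr, half_lt_self hr⟩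
  have hsupport : Function.support (bump.normed volume) = Metric.ball c r :=
    bump.support_normed_eq
  have hsubset : Function.support (bump.normed volume) ⊆ Ioc 0 L := by
    rw [hsupport]
    exact (interior_maximal (hrW.trans hWL) Metric.isOpen_ball).trans
      (interior_Icc.trans_subset Ioo_subset_Ioc_self)
  have hξ : ContDiff ℝ 1 fun x => L * bump.normed volume x :=
    contDiff_const.mul bump.contDiff_normed
  refine ⟨fun x => x - ∫ y in (0 : ℝ)..x, L * bump.normed volume y, _, hξ, fun x => ?_, by simp,
    ?_, fun x hx => ?_⟩
  · exact (hasDerivAt_id x).sub (hξ.continuous.integral_hasStrictDerivAt 0 x).hasDerivAt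
  · simp only [intervalIntegral.integral_const_mul, bump.integral_normed, mul_one, sub_self,
      intervalIntegral.integral_eq_integral_of_support_subset hsubset]
  · have hx_support : x ∉ Function.support (bump.normed volume) := hsupport ▸ fun h => hx (hrW h)
    rw [Function.notMem_support.1 hx_support, mul_zero]

namespace IsLocalizedMultiplier

variable {L : ℝ} {W : Set ℝ} {q ξ : ℝ → ℝ}

theorem contDiff_left (h : IsLocalizedMultiplier L W q ξ) : ContDiff ℝ 1 q := by
  rw [contDiff_one_iff_deriv]
  refine ⟨fun x => (h.hasDerivAt x).differentiableAt, ?_⟩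
  rw [funext fun x => (h.hasDerivAt x).deriv]
  exact continuous_const.sub h.contDiff.continuous

theorem exists_bound (h : IsLocalizedMultiplier L W q ξ) :
    ∃ Q, ∀ x ∈ Icc 0 L, |q x| ≤ Q ∧ |ξ x| ≤ Q ∧ |deriv ξ x| ≤ Q := by
  have hcont : Continuous fun x => (q x, ξ x, deriv ξ x) :=
    h.contDiff_left.continuous.prodMk
      (h.contDiff.continuous.prodMk (h.contDiff.continuous_deriv le_rfl))
  obtain ⟨Q, hQ⟩ := isCompact_Icc.exists_bound_of_continuousOn (s := Icc 0 L) hcont.continuousOn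
  exact ⟨Q, fun x hx => by simpa only [norm_prod_le_iff, Real.norm_eq_abs] using hQ x hx⟩

end IsLocalizedMultiplier

/-- Energy density of `ρ u_tt = κ u_xx`, with `y = u_x` and `v = u_t`. -/
def energyDensity (ρ κ y v : ℝ) : ℝ := ρ * v ^ 2 + κ * y ^ 2

/-- Lyapunov density of one component of a system `ρ u_tt = κ u_xx + g_x - h`, with `y = u_x` and
`v = u_t`: `N` times the energy, including half of the coupling energy `y g`, plus the multiplier
terms `q ρ u_t u_x` and `(ξ / 2) ρ u u_t`. -/
def lyapunovDensity (ρ κ N q ξ u y v g : ℝ) : ℝ :=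
  N / 2 * (energyDensity ρ κ y v + y * g) + q * (ρ * v * y) + ξ / 2 * (ρ * u * v)

/-- The flux whose divergence appears in the balance law of `lyapunovDensity`. -/
def lyapunovFlux (ρ κ N q ξ u y v g : ℝ) : ℝ :=
  N * (κ * y * v + v * g / 2) + q / 2 * energyDensity ρ κ y v + ξ / 2 * (κ * u * y)

/-- The production term in the balance law of `lyapunovDensity`, up to terms which cancel in
skew-symmetrically coupled systems. Here `η = ξ'` and `α = g_x`. -/
def lyapunovProduction (ρ κ N q ξ η u y v α h : ℝ) : ℝ :=
  -(energyDensity ρ κ y v / 2) + ξ * ρ * v ^ 2 - q * y * h - η / 2 * (κ * u * y)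
    + ξ / 2 * (u * (α - h)) - N * (h * v)

theorem energyDensity_nonneg {ρ κ : ℝ} (hρ : 0 ≤ ρ) (hκ : 0 ≤ κ) (y v : ℝ) :
    0 ≤ energyDensity ρ κ y v := by
  unfold energyDensity
  positivity

section BalanceLaw

variable {u g : ℝ × ℝ → ℝ} {q ξ : ℝ → ℝ}

/-- The Lyapunov density along a field `u` coupled through `g`. -/
def lyapunovField (ρ κ N : ℝ) (q ξ : ℝ → ℝ) (u g : ℝ × ℝ → ℝ) (z : ℝ × ℝ) : ℝ :=
  lyapunovDensity ρ κ N (q z.1) (ξ z.1) (u z) (∂ₓ u z) (∂ₜ u z) (g z)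

/-- The Lyapunov flux along a field `u` coupled through `g`. -/
def lyapunovFluxField (ρ κ N : ℝ) (q ξ : ℝ → ℝ) (u g : ℝ × ℝ → ℝ) (z : ℝ × ℝ) : ℝ :=
  lyapunovFlux ρ κ N (q z.1) (ξ z.1) (u z) (∂ₓ u z) (∂ₜ u z) (g z)

theorem contDiff_lyapunovField (ρ κ N : ℝ) (hq : ContDiff ℝ 1 q) (hξ : ContDiff ℝ 1 ξ)
    (hu : ContDiff ℝ 2 u) (hg : ContDiff ℝ 1 g) :
    ContDiff ℝ 1 (lyapunovField ρ κ N q ξ u g) := by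
  have hu₁ : ContDiff ℝ 1 u := hu.of_le one_le_two
  have hxu : ContDiff ℝ 1 (∂ₓ u) := contDiff_partialX hu one_add_one_eq_two.le
  have htu : ContDiff ℝ 1 (∂ₜ u) := contDiff_partialT hu one_add_one_eq_two.le
  unfold lyapunovField lyapunovDensity energyDensity
  generalize ∂ₓ u = y at *
  generalize ∂ₜ u = v at *
  fun_prop

theorem contDiff_lyapunovFluxField (ρ κ N : ℝ) (hq : ContDiff ℝ 1 q) (hξ : ContDiff ℝ 1 ξ)
    (hu : ContDiff ℝ 2 u) (hg : ContDiff ℝ 1 g) :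
    ContDiff ℝ 1 (lyapunovFluxField ρ κ N q ξ u g) := by
  have hu₁ : ContDiff ℝ 1 u := hu.of_le one_le_two
  have hxu : ContDiff ℝ 1 (∂ₓ u) := contDiff_partialX hu one_add_one_eq_two.le
  have htu : ContDiff ℝ 1 (∂ₜ u) := contDiff_partialT hu one_add_one_eq_two.le
  unfold lyapunovFluxField lyapunovFlux energyDensity
  generalize ∂ₓ u = y at *
  generalize ∂ₜ u = v at *
  fun_prop

theorem partialT_lyapunovField {L : ℝ} {W : Set ℝ} (hq : IsLocalizedMultiplier L W q ξ)
    (hu : ContDiff ℝ 2 u) (hg : ContDiff ℝ 1 g) (ρ κ N x t : ℝ) :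
    ∂ₜ (lyapunovField ρ κ N q ξ u g) (x, t)
      = ∂ₓ (lyapunovFluxField ρ κ N q ξ u g) (x, t)
        + lyapunovProduction ρ κ N (q x) (ξ x) (deriv ξ x) (u (x, t)) (∂ₓ u (x, t)) (∂ₜ u (x, t))
          (∂ₓ g (x, t)) (κ * ∂ₓ (∂ₓ u) (x, t) + ∂ₓ g (x, t) - ρ * ∂ₜ (∂ₜ u) (x, t))
        + (q x * (∂ₓ u (x, t) * ∂ₓ g (x, t))
          + N / 2 * (∂ₓ u (x, t) * ∂ₜ g (x, t) + ∂ₜ u (x, t) * ∂ₓ g (x, t))) := by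
  have hdu : Differentiable ℝ u := hu.differentiable two_ne_zero
  have hdxu : Differentiable ℝ (∂ₓ u) :=
    (contDiff_partialX hu one_add_one_eq_two.le).differentiable_one
  have hdtu : Differentiable ℝ (∂ₜ u) :=
    (contDiff_partialT hu one_add_one_eq_two.le).differentiable_one
  have hdg : Differentiable ℝ g := hg.differentiable_one
  have hξ : HasDerivAt ξ (deriv ξ x) x := (hq.contDiff.differentiable_one x).hasDerivAt
  have ut := hasDerivAt_partialT hdu x t
  have yt := hasDerivAt_partialT hdxu x t
  have vt := hasDerivAt_partialT hdtu x t
  have gt := hasDerivAt_partialT hdg x t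
  have ux := hasDerivAt_partialX hdu x t
  have yx := hasDerivAt_partialX hdxu x t
  have vx := hasDerivAt_partialX hdtu x t
  have gx := hasDerivAt_partialX hdg x t
  rw [partialX_partialT_comm hu] at vx
  have hdensity := ((((((vt.pow 2).const_mul ρ).add ((yt.pow 2).const_mul κ)).add
    (yt.mul gt)).const_mul (N / 2)).add (((vt.const_mul ρ).mul yt).const_mul (q x))).add
    (((ut.const_mul ρ).mul vt).const_mul (ξ x / 2))
  have hflux := (((((yx.const_mul κ).mul vx).add ((vx.mul gx).div_const 2)).const_mul N).add
    (((hq.hasDerivAt x).div_const 2).mul (((vx.pow 2).const_mul ρ).add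
      ((yx.pow 2).const_mul κ)))).add ((hξ.div_const 2).mul ((ux.const_mul κ).mul yx))
  rw [show ∂ₜ (lyapunovField ρ κ N q ξ u g) (x, t) = _ from hdensity.deriv,
    show ∂ₓ (lyapunovFluxField ρ κ N q ξ u g) (x, t) = _ from hflux.deriv]
  unfold lyapunovProduction energyDensity
  simp only [Pi.mul_apply, Pi.pow_apply, Pi.add_apply]
  ring

end BalanceLaw

section PointwiseEstimates

theorem mul_le_sq_add_sq {ε : ℝ} (hε : 0 < ε) (a b : ℝ) : a * b ≤ ε * a ^ 2 + b ^ 2 / (4 * ε) := by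
  have h : 0 ≤ (2 * ε * a - b) ^ 2 / (4 * ε) := by positivity
  have hexpand : (2 * ε * a - b) ^ 2 / (4 * ε) = ε * a ^ 2 + b ^ 2 / (4 * ε) - a * b := by
    field_simp
    ring
  linarith

theorem mul_mul_le_of_abs_le {ε Q : ℝ} (hε : 0 < ε) {q : ℝ} (hq : |q| ≤ Q) (a b : ℝ) :
    q * (a * b) ≤ ε * a ^ 2 + Q ^ 2 / (4 * ε) * b ^ 2 := by
  have hqQ : q ^ 2 ≤ Q ^ 2 := sq_le_sq' (neg_le_of_abs_le hq) (le_of_abs_le hq)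
  calc q * (a * b) = a * (q * b) := by ring
    _ ≤ ε * a ^ 2 + (q * b) ^ 2 / (4 * ε) := mul_le_sq_add_sq hε a (q * b)
    _ = ε * a ^ 2 + q ^ 2 / (4 * ε) * b ^ 2 := by ring
    _ ≤ ε * a ^ 2 + Q ^ 2 / (4 * ε) * b ^ 2 := by gcongr

theorem abs_mul_mul_le_of_abs_le {ε Q : ℝ} (hε : 0 < ε) {q : ℝ} (hq : |q| ≤ Q) (a b : ℝ) :
    |q * (a * b)| ≤ ε * a ^ 2 + Q ^ 2 / (4 * ε) * b ^ 2 := by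
  refine abs_le'.2 ⟨mul_mul_le_of_abs_le hε hq a b, ?_⟩
  rw [← neg_mul]
  exact mul_mul_le_of_abs_le hε ((abs_neg q).trans_le hq) a b

variable {ρ κ Q q ξ : ℝ}

theorem abs_lyapunovDensity_sub_le {N : ℝ} (hρ : 0 < ρ) (hκ : 0 < κ) (hN : 0 ≤ N) (hq : |q| ≤ Q)
    (hξ : |ξ| ≤ Q) (u y v g : ℝ) :
    |lyapunovDensity ρ κ N q ξ u y v g - N / 2 * energyDensity ρ κ y v|
      ≤ N / 4 * energyDensity ρ κ y v + (2 + Q ^ 2 * ρ / κ) * energyDensity ρ κ y v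
        + N / (4 * κ) * g ^ 2 + Q ^ 2 * ρ * u ^ 2 := by
  have hcoupling := abs_mul_mul_le_of_abs_le (half_pos hκ) (abs_one (α := ℝ)).le y g
  have hmultiplier := abs_mul_mul_le_of_abs_le one_pos hq v y
  have hlocalizer := abs_mul_mul_le_of_abs_le one_pos hξ v u
  calc |lyapunovDensity ρ κ N q ξ u y v g - N / 2 * energyDensity ρ κ y v|
      = |N / 2 * (1 * (y * g)) + ρ * (q * (v * y)) + ρ / 2 * (ξ * (v * u))| := by
        unfold lyapunovDensity
        ring_nf
    _ ≤ N / 2 * |1 * (y * g)| + ρ * |q * (v * y)| + ρ / 2 * |ξ * (v * u)| := by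
        refine (abs_add_three _ _ _).trans_eq ?_
        rw [abs_mul (N / 2), abs_mul ρ, abs_mul (ρ / 2), abs_of_nonneg (by positivity),
          abs_of_pos hρ, abs_of_pos (half_pos hρ)]
    _ ≤ N / 2 * (κ / 2 * y ^ 2 + 1 ^ 2 / (4 * (κ / 2)) * g ^ 2)
          + ρ * (1 * v ^ 2 + Q ^ 2 / (4 * 1) * y ^ 2)
          + ρ / 2 * (1 * v ^ 2 + Q ^ 2 / (4 * 1) * u ^ 2) := by gcongr
    _ ≤ _ := by
        rw [← sub_nonneg]
        have hpos : 0 ≤ N / 4 * (ρ * v ^ 2) + ρ * v ^ 2 / 2 + 2 * κ * y ^ 2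
            + Q ^ 2 * ρ ^ 2 / κ * v ^ 2 + 3 / 4 * Q ^ 2 * ρ * y ^ 2
            + 7 / 8 * Q ^ 2 * ρ * u ^ 2 := by positivity
        convert hpos using 1
        unfold energyDensity
        field_simp
        ring

theorem eventually_lyapunovDensity_bounds (hρ : 0 < ρ) (hκ : 0 < κ) (c Q : ℝ) :
    ∀ᶠ N in atTop, ∀ᶠ C in atTop, ∀ q ξ u y v g U : ℝ, |q| ≤ Q → |ξ| ≤ Q → u ^ 2 ≤ U →
      g ^ 2 ≤ c * U →
      energyDensity ρ κ y v - C * U ≤ lyapunovDensity ρ κ N q ξ u y v g ∧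
        lyapunovDensity ρ κ N q ξ u y v g ≤ C * (energyDensity ρ κ y v + U) := by
  filter_upwards [eventually_ge_atTop (4 * (3 + Q ^ 2 * ρ / κ)), eventually_ge_atTop 0]
    with N hN hN₀
  filter_upwards [eventually_ge_atTop N, eventually_ge_atTop (N / (4 * κ) * c + Q ^ 2 * ρ)]
    with C hC hC' q ξ u y v g U hq hξ hu hg
  have habs := abs_le.1 (abs_lyapunovDensity_sub_le hρ hκ hN₀ hq hξ u y v g)
  have hE : 0 ≤ energyDensity ρ κ y v := energyDensity_nonneg hρ.le hκ.le y v
  have hU : 0 ≤ U := (sq_nonneg u).trans hu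
  have hremainder : N / (4 * κ) * g ^ 2 + Q ^ 2 * ρ * u ^ 2 ≤ C * U := calc
    _ ≤ N / (4 * κ) * (c * U) + Q ^ 2 * ρ * U := by gcongr
    _ = (N / (4 * κ) * c + Q ^ 2 * ρ) * U := by ring
    _ ≤ C * U := by gcongr
  have habsorb : (2 + Q ^ 2 * ρ / κ) * energyDensity ρ κ y v
      ≤ (N / 4 - 1) * energyDensity ρ κ y v := by
    gcongr
    linarith
  constructor
  · linarith
  · have := mul_le_mul_of_nonneg_right hC hE
    linarith

theorem kinetic_terms_le_damping {N D C₀ d : ℝ} (hρ : 0 ≤ ρ) (hκ : 0 < κ)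
    (hN : ρ * C₀ + 4 * Q ^ 2 * D / κ + 1 ≤ N) (hd : 0 ≤ d) (hdD : d ≤ D) (hξd : ξ ≤ C₀ * d)
    (v : ℝ) :
    ξ * (ρ * v ^ 2) + 4 * Q ^ 2 / κ * (d * v) ^ 2 + d * v ^ 2 ≤ N * (d * v ^ 2) := by
  have hd_sq : (d * v) ^ 2 ≤ D * (d * v ^ 2) := calc
    (d * v) ^ 2 = d * (d * v ^ 2) := by ring
    _ ≤ D * (d * v ^ 2) := by gcongr
  calc ξ * (ρ * v ^ 2) + 4 * Q ^ 2 / κ * (d * v) ^ 2 + d * v ^ 2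
      ≤ C₀ * d * (ρ * v ^ 2) + 4 * Q ^ 2 / κ * (D * (d * v ^ 2)) + d * v ^ 2 := by gcongr
    _ = (ρ * C₀ + 4 * Q ^ 2 * D / κ + 1) * (d * v ^ 2) := by ring
    _ ≤ N * (d * v ^ 2) := by gcongr

theorem lyapunovProduction_le {N D C₀ d δ η : ℝ} (hρ : 0 < ρ) (hκ : 0 < κ) (hδ : 0 < δ)
    (hN : ρ * C₀ + 4 * Q ^ 2 * D / κ + 1 ≤ N) (hd : 0 ≤ d) (hdD : d ≤ D) (hq : |q| ≤ Q)
    (hξ : |ξ| ≤ Q) (hη : |η| ≤ Q) (hξd : ξ ≤ C₀ * d) (u y v α F : ℝ) :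
    lyapunovProduction ρ κ N q ξ η u y v α (d * v + F)
      ≤ -(energyDensity ρ κ y v / 4) + δ * α ^ 2
        + (κ * Q ^ 2 + Q ^ 2 / (16 * δ) + Q ^ 2 * D / 16 + Q ^ 2 / 16) * u ^ 2
        + (4 * Q ^ 2 / κ + 1 + 2 * N ^ 2 / ρ) * F ^ 2 := by
  have hqdv : q * (y * -(d * v)) ≤ κ / 16 * y ^ 2 + Q ^ 2 / (4 * (κ / 16)) * (-(d * v)) ^ 2 :=
    mul_mul_le_of_abs_le (by positivity) hq _ _
  have hqF : q * (y * -F) ≤ κ / 16 * y ^ 2 + Q ^ 2 / (4 * (κ / 16)) * (-F) ^ 2 :=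
    mul_mul_le_of_abs_le (by positivity) hq _ _
  have hηu : η * (y * -u) ≤ 1 / 8 * y ^ 2 + Q ^ 2 / (4 * (1 / 8)) * (-u) ^ 2 :=
    mul_mul_le_of_abs_le (by positivity) hη _ _
  have hξα : ξ * (α * u) ≤ 2 * δ * α ^ 2 + Q ^ 2 / (4 * (2 * δ)) * u ^ 2 :=
    mul_mul_le_of_abs_le (by positivity) hξ _ _
  have hξv : ξ * (v * -u) ≤ 2 * v ^ 2 + Q ^ 2 / (4 * 2) * (-u) ^ 2 :=
    mul_mul_le_of_abs_le two_pos hξ _ _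
  have hξF : ξ * (F * -u) ≤ 2 * F ^ 2 + Q ^ 2 / (4 * 2) * (-u) ^ 2 :=
    mul_mul_le_of_abs_le two_pos hξ _ _
  have hvF : v * (-N * F) ≤ ρ / 8 * v ^ 2 + (-N * F) ^ 2 / (4 * (ρ / 8)) :=
    mul_le_sq_add_sq (by positivity) _ _
  have hdamping := kinetic_terms_le_damping hρ.le hκ hN hd hdD hξd v
  have hdu : d * (Q ^ 2 / 16 * u ^ 2) ≤ D * (Q ^ 2 / 16 * u ^ 2) := by gcongr
  calc lyapunovProduction ρ κ N q ξ η u y v α (d * v + F)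
      = -(energyDensity ρ κ y v / 2) + ξ * (ρ * v ^ 2) + q * (y * -(d * v)) + q * (y * -F)
          + κ / 2 * (η * (y * -u)) + 1 / 2 * (ξ * (α * u)) + d / 2 * (ξ * (v * -u))
          + 1 / 2 * (ξ * (F * -u)) - N * (d * v ^ 2) + v * (-N * F) := by
        unfold lyapunovProduction
        ring
    _ ≤ -(energyDensity ρ κ y v / 2) + ξ * (ρ * v ^ 2)
          + (κ / 16 * y ^ 2 + Q ^ 2 / (4 * (κ / 16)) * (-(d * v)) ^ 2)
          + (κ / 16 * y ^ 2 + Q ^ 2 / (4 * (κ / 16)) * (-F) ^ 2)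
          + κ / 2 * (1 / 8 * y ^ 2 + Q ^ 2 / (4 * (1 / 8)) * (-u) ^ 2)
          + 1 / 2 * (2 * δ * α ^ 2 + Q ^ 2 / (4 * (2 * δ)) * u ^ 2)
          + d / 2 * (2 * v ^ 2 + Q ^ 2 / (4 * 2) * (-u) ^ 2)
          + 1 / 2 * (2 * F ^ 2 + Q ^ 2 / (4 * 2) * (-u) ^ 2) - N * (d * v ^ 2)
          + (ρ / 8 * v ^ 2 + (-N * F) ^ 2 / (4 * (ρ / 8))) := by gcongr
    _ = -(energyDensity ρ κ y v / 4) - ρ * v ^ 2 / 8 - κ * y ^ 2 / 16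
          + (ξ * (ρ * v ^ 2) + 4 * Q ^ 2 / κ * (d * v) ^ 2 + d * v ^ 2 - N * (d * v ^ 2))
          + δ * α ^ 2 + (κ * Q ^ 2 + Q ^ 2 / (16 * δ) + Q ^ 2 / 16) * u ^ 2
          + d * (Q ^ 2 / 16 * u ^ 2) + (4 * Q ^ 2 / κ + 1 + 2 * N ^ 2 / ρ) * F ^ 2 := by
        unfold energyDensity
        ring
    _ ≤ _ := by
        have hv : 0 ≤ ρ * v ^ 2 := by positivity
        have hy : 0 ≤ κ * y ^ 2 := by positivity
        linarith

theorem eventually_lyapunovProduction_le (hρ : 0 < ρ) (hκ : 0 < κ) {d₀ δ : ℝ} (hd₀ : 0 < d₀)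
    (hδ : 0 < δ) (Q D A : ℝ) :
    ∀ᶠ N in atTop, ∀ᶠ C in atTop, ∀ q ξ η u y v α d F U : ℝ, |q| ≤ Q → |ξ| ≤ Q → |η| ≤ Q →
      u ^ 2 ≤ U → 0 ≤ d → d ≤ D → (d < d₀ → ξ = 0) → F ^ 2 ≤ A * U →
      lyapunovProduction ρ κ N q ξ η u y v α (d * v + F)
        ≤ -(energyDensity ρ κ y v / 4) + δ * α ^ 2 + C * U := by
  filter_upwards [eventually_ge_atTop (ρ * (Q / d₀) + 4 * Q ^ 2 * D / κ + 1)] with N hN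
  let Cu := κ * Q ^ 2 + Q ^ 2 / (16 * δ) + Q ^ 2 * D / 16 + Q ^ 2 / 16
  let CF := 4 * Q ^ 2 / κ + 1 + 2 * N ^ 2 / ρ
  filter_upwards [eventually_ge_atTop (Cu + CF * A)]
    with C hC q ξ η u y v α d F U hq hξ hη hu hd hdD hξd hF
  have hU : 0 ≤ U := (sq_nonneg u).trans hu
  have hCu : 0 ≤ Cu := by
    have hD : 0 ≤ D := hd.trans hdD
    positivity
  have hξ_le : ξ ≤ Q / d₀ * d := by
    have hQ : 0 ≤ Q := (abs_nonneg q).trans hq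
    rcases lt_or_ge d d₀ with hlt | hge
    · rw [hξd hlt]
      positivity
    · calc ξ ≤ Q := le_of_abs_le hξ
        _ = Q / d₀ * d₀ := (div_mul_cancel₀ Q hd₀.ne').symm
        _ ≤ Q / d₀ * d := by gcongr
  calc lyapunovProduction ρ κ N q ξ η u y v α (d * v + F)
      ≤ -(energyDensity ρ κ y v / 4) + δ * α ^ 2 + Cu * u ^ 2 + CF * F ^ 2 :=
        lyapunovProduction_le hρ hκ hδ hN hd hdD hq hξ hη hξ_le u y v α F
    _ ≤ -(energyDensity ρ κ y v / 4) + δ * α ^ 2 + Cu * U + CF * (A * U) := by gcongr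
    _ = -(energyDensity ρ κ y v / 4) + δ * α ^ 2 + (Cu + CF * A) * U := by ring
    _ ≤ -(energyDensity ρ κ y v / 4) + δ * α ^ 2 + C * U := by gcongr

end PointwiseEstimates

theorem exp_mul_le_add_integral_of_deriv_le {y y' μ : ℝ → ℝ} {c T : ℝ} (hT : 0 ≤ T)
    (hy : ∀ t ∈ Icc 0 T, HasDerivAt y (y' t) t) (hμ : Continuous μ)
    (hle : ∀ t ∈ Icc 0 T, y' t ≤ c * y t + μ t) :
    Real.exp (-c * T) * y T ≤ y 0 + ∫ s in (0 : ℝ)..T, Real.exp (-c * s) * μ s := by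
  have hderiv (t : ℝ) (ht : t ∈ Icc 0 T) :
      HasDerivAt (fun t => Real.exp (-c * t) * y t - ∫ s in (0 : ℝ)..t, Real.exp (-c * s) * μ s)
        (Real.exp (-c * t) * (y' t - c * y t - μ t)) t := by
    have hexp : HasDerivAt (fun t => Real.exp (-c * t)) (Real.exp (-c * t) * -c) t := by
      simpa using ((hasDerivAt_id t).const_mul (-c)).exp
    have hforcing : Continuous fun s => Real.exp (-c * s) * μ s := by fun_prop
    exact ((hexp.fun_mul (hy t ht)).fun_sub
      (hforcing.integral_hasStrictDerivAt 0 t).hasDerivAt).congr_deriv (by ring)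
  have hanti := antitoneOn_of_hasDerivWithinAt_nonpos (convex_Icc 0 T)
    (fun t ht => (hderiv t ht).continuousAt.continuousWithinAt)
    (fun t ht => (hderiv t (interior_subset ht)).hasDerivWithinAt)
    fun t ht => mul_nonpos_of_nonneg_of_nonpos (Real.exp_pos _).le
      (by linarith [hle t (interior_subset ht)])
  have hT0 := hanti (left_mem_Icc.2 hT) (right_mem_Icc.2 hT) hT
  simp only [mul_zero, Real.exp_zero, one_mul, intervalIntegral.integral_same, sub_zero] at hT0
  linarith

theorem le_exp_mul_add_integral_of_deriv_le {y y' μ : ℝ → ℝ} {c T : ℝ} (hc : 0 ≤ c) (hT : 0 ≤ T)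
    (hy : ∀ t ∈ Icc 0 T, HasDerivAt y (y' t) t) (hμ : Continuous μ) (hμ_nonneg : ∀ t, 0 ≤ μ t)
    (hle : ∀ t ∈ Icc 0 T, y' t ≤ c * y t + μ t) :
    y T ≤ Real.exp (c * T) * (y 0 + ∫ s in (0 : ℝ)..T, μ s) := by
  have hforcing : ∫ s in (0 : ℝ)..T, Real.exp (-c * s) * μ s ≤ ∫ s in (0 : ℝ)..T, μ s := by
    refine intervalIntegral.integral_mono_on hT
      (Continuous.intervalIntegrable (by fun_prop) _ _) (hμ.intervalIntegrable _ _)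
      fun s hs => mul_le_of_le_one_left (hμ_nonneg s) ?_
    exact Real.exp_le_one_iff.2 (by nlinarith [hs.1])
  calc
    y T = Real.exp (c * T) * (Real.exp (-c * T) * y T) := by
      rw [← mul_assoc, ← Real.exp_add, neg_mul, add_neg_cancel, Real.exp_zero, one_mul]
    _ ≤ Real.exp (c * T) * (y 0 + ∫ s in (0 : ℝ)..T, μ s) := by
      gcongr
      linarith [exp_mul_le_add_integral_of_deriv_le hT hy hμ hle]

theorem le_exp_mul_add_of_deriv_le {y y' : ℝ → ℝ} {ω ε T : ℝ} (hε : 0 ≤ ε)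
    (hT : 0 ≤ T) (hy : ∀ t ∈ Icc 0 T, HasDerivAt y (y' t) t)
    (hle : ∀ t ∈ Icc 0 T, y' t ≤ -(ω * y t) + ω * ε) :
    y T ≤ Real.exp (-ω * T) * y 0 + ε := by
  have hshift := exp_mul_le_add_integral_of_deriv_le (y := fun t => y t - ε) (μ := 0) (c := -ω) hT
    (fun t ht => (hy t ht).sub_const ε) continuous_zero
    (fun t ht => by linarith [hle t ht, show (0 : ℝ → ℝ) t = 0 from rfl])
  simp only [Pi.zero_apply, mul_zero, intervalIntegral.integral_zero, add_zero, neg_neg] at hshift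
  have hmul := mul_le_mul_of_nonneg_left hshift (Real.exp_pos (-ω * T)).le
  rw [← mul_assoc, ← Real.exp_add, neg_mul, neg_add_cancel, Real.exp_zero, one_mul] at hmul
  rw [neg_mul]
  linarith [mul_nonneg (Real.exp_pos (-(ω * T))).le hε]

theorem sq_rpow_eq_abs_rpow (a p : ℝ) : (a ^ 2) ^ p = |a| ^ (2 * p) := by
  rw [← sq_abs, Real.rpow_mul (abs_nonneg a), Real.rpow_two]

theorem integral_sq_le_mul_rpow_integral_rpow {a b p : ℝ} (hab : a < b) (hp : 1 ≤ p) {u : ℝ → ℝ}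
    (hu : Continuous u) :
    ∫ x in a..b, u x ^ 2 ≤ (b - a) ^ (1 - 1 / p) * (∫ x in a..b, |u x| ^ (2 * p)) ^ (1 / p) := by
  have hp₀ : 0 < p := zero_lt_one.trans_le hp
  have hba : 0 < b - a := sub_pos.2 hab
  have hpow : Continuous fun x => |u x| ^ (2 * p) :=
    hu.abs.rpow_const fun _ => Or.inr (by positivity)
  have hjensen := (convexOn_rpow hp).map_set_average_le (μ := volume) (t := Ioc a b)
    (f := fun x => u x ^ 2)
    (fun x _ => (Real.continuousAt_rpow_const _ _ (Or.inr hp₀.le)).continuousWithinAt) isClosed_Ici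
    (by simpa using hab) (by simp) (Eventually.of_forall fun x => mem_Ici.2 (sq_nonneg _))
    (hu.pow 2).integrableOn_Ioc
    (by simpa only [Function.comp_def, sq_rpow_eq_abs_rpow] using hpow.integrableOn_Ioc)
  simp only [sq_rpow_eq_abs_rpow, ← uIoc_of_le hab.le, interval_average_eq, smul_eq_mul]
    at hjensen
  have hI : 0 ≤ ∫ x in a..b, u x ^ 2 :=
    intervalIntegral.integral_nonneg hab.le fun x _ => sq_nonneg _
  have hJ : 0 ≤ ∫ x in a..b, |u x| ^ (2 * p) :=
    intervalIntegral.integral_nonneg hab.le fun x _ => by positivity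
  rw [← Real.le_rpow_inv_iff_of_pos (by positivity) (by positivity) hp₀,
    inv_mul_le_iff₀ hba, Real.mul_rpow (by positivity) hJ, Real.inv_rpow hba.le] at hjensen
  rwa [Real.rpow_sub hba, Real.rpow_one, one_div, div_eq_mul_inv, mul_assoc]

/-- A system of wave equations `ρᵢ ∂ₜₜuᵢ = κᵢ ∂ₓₓuᵢ + ∑ⱼ Sᵢⱼ ∂ₓuⱼ - …` on `[0, L]` with
skew-symmetric first-order coupling `S`. -/
structure SkewWaveSystem (ι : Type*) where
  /-- the length of the spatial interval -/
  L : ℝ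
  /-- the inertia coefficients -/
  ρ : ι → ℝ
  /-- the stiffness coefficients -/
  κ : ι → ℝ
  /-- the first-order coupling -/
  S : ι → ι → ℝ
  ρ_pos : ∀ i, 0 < ρ i
  κ_pos : ∀ i, 0 < κ i
  skew : ∀ i j, S j i = -S i j

namespace SkewWaveSystem

variable {ι : Type*} [Fintype ι] (P : SkewWaveSystem ι)

/-- The field `∑ⱼ Sᵢⱼ uⱼ`, whose space derivative couples equation `i` to the other ones. -/
def couplingField (u : ι → ℝ × ℝ → ℝ) (i : ι) (z : ℝ × ℝ) : ℝ := ∑ j, P.S i j * u j z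

/-- The quantity `κᵢ ∂ₓₓuᵢ + ∑ⱼ Sᵢⱼ ∂ₓuⱼ - ρᵢ ∂ₜₜuᵢ`, which damping and lower-order terms must
balance. -/
def residual (u : ι → ℝ × ℝ → ℝ) (i : ι) (z : ℝ × ℝ) : ℝ :=
  P.κ i * ∂ₓ (∂ₓ (u i)) z + ∑ j, P.S i j * ∂ₓ (u j) z - P.ρ i * ∂ₜ (∂ₜ (u i)) z

/-- The pointwise energy of all components. -/
def energyAt (u : ι → ℝ × ℝ → ℝ) (z : ℝ × ℝ) : ℝ :=
  ∑ i, energyDensity (P.ρ i) (P.κ i) (∂ₓ (u i) z) (∂ₜ (u i) z)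

/-- The energy `∫₀ᴸ ∑ᵢ (ρᵢ |∂ₜuᵢ|² + κᵢ |∂ₓuᵢ|²)`, without the coupling terms. -/
def energy (u : ι → ℝ × ℝ → ℝ) (t : ℝ) : ℝ := ∫ x in (0 : ℝ)..P.L, P.energyAt u (x, t)

/-- The squared `L²` norm of the displacements at time `t`. -/
def normSq (u : ι → ℝ × ℝ → ℝ) (t : ℝ) : ℝ := ∫ x in (0 : ℝ)..P.L, ∑ i, u i (x, t) ^ 2

/-- The pointwise Lyapunov density of all components. -/
def lyapunovAt (N : ℝ) (q ξ : ℝ → ℝ) (u : ι → ℝ × ℝ → ℝ) (z : ℝ × ℝ) : ℝ :=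
  ∑ i, lyapunovField (P.ρ i) (P.κ i) N q ξ (u i) (P.couplingField u i) z

/-- The pointwise Lyapunov flux of all components. -/
def fluxAt (N : ℝ) (q ξ : ℝ → ℝ) (u : ι → ℝ × ℝ → ℝ) (z : ℝ × ℝ) : ℝ :=
  ∑ i, lyapunovFluxField (P.ρ i) (P.κ i) N q ξ (u i) (P.couplingField u i) z

/-- The pointwise Lyapunov production of all components. -/
def productionAt (N : ℝ) (q ξ : ℝ → ℝ) (u : ι → ℝ × ℝ → ℝ) (z : ℝ × ℝ) : ℝ :=
  ∑ i, lyapunovProduction (P.ρ i) (P.κ i) N (q z.1) (ξ z.1) (deriv ξ z.1) (u i z) (∂ₓ (u i) z)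
    (∂ₜ (u i) z) (∑ j, P.S i j * ∂ₓ (u j) z) (P.residual u i z)

/-- The Lyapunov functional `∫₀ᴸ` of `lyapunovAt`. -/
def lyapunov (N : ℝ) (q ξ : ℝ → ℝ) (u : ι → ℝ × ℝ → ℝ) (t : ℝ) : ℝ :=
  ∫ x in (0 : ℝ)..P.L, P.lyapunovAt N q ξ u (x, t)

/-- `u` is a `C²` solution, for nonnegative times and with Dirichlet conditions, of the wave
system with a linear damping whose coefficient lies in `[0, Dᵢ]` and is at least `dᵢ` on `W`, and
with a lower-order term bounded in terms of the displacements. -/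
structure IsDampedWave (W : Set ℝ) (d D A : ι → ℝ) (u : ι → ℝ × ℝ → ℝ) : Prop where
  contDiff : ∀ i, ContDiff ℝ 2 (u i)
  left : ∀ i t, 0 ≤ t → u i (0, t) = 0
  right : ∀ i t, 0 ≤ t → u i (P.L, t) = 0
  residual_eq : ∀ i, ∀ x ∈ Icc 0 P.L, ∀ t, 0 ≤ t → ∃ e F : ℝ, 0 ≤ e ∧ e ≤ D i ∧
    (x ∈ W → d i ≤ e) ∧ F ^ 2 ≤ A i * ∑ j, u j (x, t) ^ 2 ∧
    P.residual u i (x, t) = e * ∂ₜ (u i) (x, t) + F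

variable {P} {u : ι → ℝ × ℝ → ℝ} {q ξ : ℝ → ℝ} {W : Set ℝ} {d D A : ι → ℝ}

theorem contDiff_couplingField {n : WithTop ℕ∞} (hu : ∀ i, ContDiff ℝ n (u i)) (i : ι) :
    ContDiff ℝ n (P.couplingField u i) :=
  ContDiff.sum fun j _ => contDiff_const.mul (hu j)

theorem partialX_couplingField (hu : ∀ i, Differentiable ℝ (u i)) (i : ι) (z : ℝ × ℝ) :
    ∂ₓ (P.couplingField u i) z = ∑ j, P.S i j * ∂ₓ (u j) z :=
  (HasDerivAt.fun_sum fun j _ =>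
    (hasDerivAt_partialX (hu j) z.1 z.2).const_mul (P.S i j)).deriv

theorem partialT_couplingField (hu : ∀ i, Differentiable ℝ (u i)) (i : ι) (z : ℝ × ℝ) :
    ∂ₜ (P.couplingField u i) z = ∑ j, P.S i j * ∂ₜ (u j) z :=
  (HasDerivAt.fun_sum fun j _ =>
    (hasDerivAt_partialT (hu j) z.1 z.2).const_mul (P.S i j)).deriv

variable (P) in
theorem sum_mul_coupling_add_swap (a c : ι → ℝ) :
    ∑ i, a i * ∑ j, P.S i j * c j + ∑ i, c i * ∑ j, P.S i j * a j = 0 := by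
  simp only [Finset.mul_sum]
  rw [Finset.sum_comm (f := fun i j => c i * (P.S i j * a j)), ← Finset.sum_add_distrib]
  refine Finset.sum_eq_zero fun i _ => ?_
  rw [← Finset.sum_add_distrib]
  exact Finset.sum_eq_zero fun j _ => by rw [P.skew i j]; ring

variable (P) in
theorem sum_mul_coupling_self (a : ι → ℝ) : ∑ i, a i * ∑ j, P.S i j * a j = 0 :=
  self_eq_neg.1 (eq_neg_of_add_eq_zero_left (P.sum_mul_coupling_add_swap a a))

variable (P) in
theorem sq_coupling_le (a : ι → ℝ) (i : ι) :
    (∑ j, P.S i j * a j) ^ 2 ≤ (∑ j, P.S i j ^ 2) * ∑ j, a j ^ 2 :=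
  Finset.sum_mul_sq_le_sq_mul_sq _ _ _

theorem contDiff_lyapunovAt (hu : ∀ i, ContDiff ℝ 2 (u i))
    (hq : IsLocalizedMultiplier P.L W q ξ) (N : ℝ) : ContDiff ℝ 1 (P.lyapunovAt N q ξ u) :=
  ContDiff.sum fun i _ => contDiff_lyapunovField _ _ _ hq.contDiff_left hq.contDiff (hu i)
    ((contDiff_couplingField hu i).of_le one_le_two)

theorem contDiff_fluxAt (hu : ∀ i, ContDiff ℝ 2 (u i)) (hq : IsLocalizedMultiplier P.L W q ξ)
    (N : ℝ) : ContDiff ℝ 1 (P.fluxAt N q ξ u) :=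
  ContDiff.sum fun i _ => contDiff_lyapunovFluxField _ _ _ hq.contDiff_left hq.contDiff (hu i)
    ((contDiff_couplingField hu i).of_le one_le_two)

theorem partialT_lyapunovAt (hu : ∀ i, ContDiff ℝ 2 (u i)) (hq : IsLocalizedMultiplier P.L W q ξ)
    (N x t : ℝ) :
    ∂ₜ (P.lyapunovAt N q ξ u) (x, t)
      = P.productionAt N q ξ u (x, t) + ∂ₓ (P.fluxAt N q ξ u) (x, t) := by
  have hg (i : ι) : ContDiff ℝ 1 (P.couplingField u i) :=
    (contDiff_couplingField hu i).of_le one_le_two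
  have hdu (i : ι) : Differentiable ℝ (u i) := (hu i).differentiable two_ne_zero
  have hsum_density : ∂ₜ (P.lyapunovAt N q ξ u) (x, t)
      = ∑ i, ∂ₜ (lyapunovField (P.ρ i) (P.κ i) N q ξ (u i) (P.couplingField u i)) (x, t) :=
    (HasDerivAt.fun_sum fun i _ => hasDerivAt_partialT (contDiff_lyapunovField _ _ _
      hq.contDiff_left hq.contDiff (hu i) (hg i)).differentiable_one x t).deriv
  have hsum_flux : ∂ₓ (P.fluxAt N q ξ u) (x, t)
      = ∑ i, ∂ₓ (lyapunovFluxField (P.ρ i) (P.κ i) N q ξ (u i) (P.couplingField u i)) (x, t) :=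
    (HasDerivAt.fun_sum fun i _ => hasDerivAt_partialX (contDiff_lyapunovFluxField _ _ _
      hq.contDiff_left hq.contDiff (hu i) (hg i)).differentiable_one x t).deriv
  simp only [hsum_density, hsum_flux, partialT_lyapunovField hq (hu _) (hg _),
    partialX_couplingField hdu, partialT_couplingField hdu, Finset.sum_add_distrib,
    ← Finset.mul_sum, sum_mul_coupling_self, sum_mul_coupling_add_swap]
  unfold productionAt residual
  ring

theorem fluxAt_eq_zero (hu : ∀ i, ContDiff ℝ 2 (u i)) {x : ℝ} (hqx : q x = 0)
    (hux : ∀ i t, 0 ≤ t → u i (x, t) = 0) (N : ℝ) {t : ℝ} (ht : 0 ≤ t) :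
    P.fluxAt N q ξ u (x, t) = 0 := by
  refine Finset.sum_eq_zero fun i _ => ?_
  have hv : ∂ₜ (u i) (x, t) = 0 :=
    partialT_eq_zero_of_boundary ((hu i).differentiable two_ne_zero) (hux i) ht
  simp [lyapunovFluxField, lyapunovFlux, hqx, hux i t ht, hv]

theorem continuous_productionAt (hu : ∀ i, ContDiff ℝ 2 (u i))
    (hq : IsLocalizedMultiplier P.L W q ξ) (N : ℝ) : Continuous (P.productionAt N q ξ u) := by
  have hproduction : P.productionAt N q ξ u
      = ∂ₜ (P.lyapunovAt N q ξ u) - ∂ₓ (P.fluxAt N q ξ u) :=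
    funext fun z => eq_sub_of_add_eq (partialT_lyapunovAt hu hq N z.1 z.2).symm
  rw [hproduction]
  exact (contDiff_partialT (contDiff_lyapunovAt hu hq N) (zero_add 1).le).continuous.sub
    (contDiff_partialX (contDiff_fluxAt hu hq N) (zero_add 1).le).continuous

theorem IsDampedWave.hasDerivAt_lyapunov (hu : P.IsDampedWave W d D A u)
    (hq : IsLocalizedMultiplier P.L W q ξ) (N : ℝ) {t : ℝ} (ht : 0 ≤ t) :
    HasDerivAt (P.lyapunov N q ξ u) (∫ x in (0 : ℝ)..P.L, P.productionAt N q ξ u (x, t)) t := by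
  have hflux : ContDiff ℝ 1 (P.fluxAt N q ξ u) := contDiff_fluxAt hu.contDiff hq N
  have hintegral : ∫ x in (0 : ℝ)..P.L, ∂ₜ (P.lyapunovAt N q ξ u) (x, t)
      = ∫ x in (0 : ℝ)..P.L, P.productionAt N q ξ u (x, t) := by
    simp only [partialT_lyapunovAt hu.contDiff hq]
    rw [intervalIntegral.integral_add, integral_partialX hflux,
      fluxAt_eq_zero hu.contDiff hq.right hu.right N ht,
      fluxAt_eq_zero hu.contDiff hq.left hu.left N ht, sub_zero, add_zero]
    · exact ((continuous_productionAt hu.contDiff hq N).comp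
        (Continuous.prodMk_left t)).intervalIntegrable _ _
    · exact ((contDiff_partialX hflux (zero_add 1).le).continuous.comp
        (Continuous.prodMk_left t)).intervalIntegrable _ _
  exact hintegral ▸ hasDerivAt_integral_partialT (contDiff_lyapunovAt hu.contDiff hq N) 0 P.L t

variable (P) in
theorem energyAt_nonneg (u : ι → ℝ × ℝ → ℝ) (z : ℝ × ℝ) : 0 ≤ P.energyAt u z :=
  Finset.sum_nonneg fun i _ => energyDensity_nonneg (P.ρ_pos i).le (P.κ_pos i).le _ _

variable (P) in
theorem sq_partialX_le (u : ι → ℝ × ℝ → ℝ) (i : ι) (z : ℝ × ℝ) :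
    ∂ₓ (u i) z ^ 2 ≤ (P.κ i)⁻¹ * P.energyAt u z := by
  rw [le_inv_mul_iff₀ (P.κ_pos i)]
  calc P.κ i * ∂ₓ (u i) z ^ 2 ≤ energyDensity (P.ρ i) (P.κ i) (∂ₓ (u i) z) (∂ₜ (u i) z) :=
        le_add_of_nonneg_left (mul_nonneg (P.ρ_pos i).le (sq_nonneg _))
    _ ≤ P.energyAt u z := Finset.single_le_sum
        (f := fun i => energyDensity (P.ρ i) (P.κ i) (∂ₓ (u i) z) (∂ₜ (u i) z))
        (fun i _ => energyDensity_nonneg (P.ρ_pos i).le (P.κ_pos i).le _ _) (Finset.mem_univ i)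

variable (P) in
theorem exists_sum_sq_coupling_le :
    ∃ c, 0 ≤ c ∧ ∀ (u : ι → ℝ × ℝ → ℝ) (z : ℝ × ℝ),
      ∑ i, (∑ j, P.S i j * ∂ₓ (u j) z) ^ 2 ≤ c * P.energyAt u z := by
  refine ⟨(∑ i, ∑ j, P.S i j ^ 2) * ∑ j, (P.κ j)⁻¹, mul_nonneg (by positivity)
    (Finset.sum_nonneg fun j _ => (inv_pos.2 (P.κ_pos j)).le), fun u z => ?_⟩
  calc ∑ i, (∑ j, P.S i j * ∂ₓ (u j) z) ^ 2
      ≤ ∑ i, (∑ j, P.S i j ^ 2) * ∑ j, ∂ₓ (u j) z ^ 2 :=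
        Finset.sum_le_sum fun i _ => P.sq_coupling_le _ i
    _ = (∑ i, ∑ j, P.S i j ^ 2) * ∑ j, ∂ₓ (u j) z ^ 2 := (Finset.sum_mul ..).symm
    _ ≤ (∑ i, ∑ j, P.S i j ^ 2) * ∑ j, (P.κ j)⁻¹ * P.energyAt u z := by
        gcongr with j
        exact P.sq_partialX_le u j z
    _ = _ := by rw [← Finset.sum_mul, mul_assoc]

variable (P) in
theorem eventually_lyapunovAt_bounds (Q : ℝ) :
    ∀ᶠ N in atTop, ∃ C, 0 < C ∧ ∀ (u : ι → ℝ × ℝ → ℝ) (q ξ : ℝ → ℝ) (z : ℝ × ℝ),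
      |q z.1| ≤ Q → |ξ z.1| ≤ Q →
      P.energyAt u z - C * ∑ j, u j z ^ 2 ≤ P.lyapunovAt N q ξ u z ∧
        P.lyapunovAt N q ξ u z ≤ C * (P.energyAt u z + ∑ j, u j z ^ 2) := by
  filter_upwards [eventually_all.2 fun i => eventually_lyapunovDensity_bounds (P.ρ_pos i)
    (P.κ_pos i) (∑ j, P.S i j ^ 2) Q] with N hN
  obtain ⟨C, hC, hC₀⟩ := ((eventually_all.2 hN).and (eventually_gt_atTop 0)).exists
  refine ⟨C * (Fintype.card ι + 1), by positivity, fun u q ξ z hq hξ => ?_⟩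
  have hbounds (i : ι) := hC i (q z.1) (ξ z.1) (u i z) (∂ₓ (u i) z) (∂ₜ (u i) z)
    (P.couplingField u i z) (∑ j, u j z ^ 2) hq hξ
    (Finset.single_le_sum (fun j _ => sq_nonneg (u j z)) (Finset.mem_univ i))
    (P.sq_coupling_le (fun j => u j z) i)
  have hlower := Finset.sum_le_sum fun i (_ : i ∈ Finset.univ) => (hbounds i).1
  have hupper := Finset.sum_le_sum fun i (_ : i ∈ Finset.univ) => (hbounds i).2
  simp only [Finset.sum_sub_distrib, ← Finset.mul_sum, Finset.sum_add_distrib, Finset.sum_const,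
    Finset.card_univ, nsmul_eq_mul] at hlower hupper
  change P.energyAt u z - _ ≤ P.lyapunovAt N q ξ u z at hlower
  change P.lyapunovAt N q ξ u z ≤ C * (P.energyAt u z + _) at hupper
  have hU : 0 ≤ C * ∑ j, u j z ^ 2 := by positivity
  have hE : 0 ≤ C * (Fintype.card ι * P.energyAt u z) :=
    mul_nonneg hC₀.le (mul_nonneg (Nat.cast_nonneg _) (P.energyAt_nonneg u z))
  constructor <;> linarith

theorem eventually_productionAt_le (hd : ∀ i, 0 < d i) (D A : ι → ℝ) (Q : ℝ) :
    ∀ᶠ N in atTop, ∃ C, ∀ (u : ι → ℝ × ℝ → ℝ) (q ξ : ℝ → ℝ), P.IsDampedWave W d D A u →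
      IsLocalizedMultiplier P.L W q ξ → ∀ x ∈ Icc 0 P.L, ∀ t, 0 ≤ t →
      |q x| ≤ Q → |ξ x| ≤ Q → |deriv ξ x| ≤ Q →
      P.productionAt N q ξ u (x, t)
        ≤ -(P.energyAt u (x, t) / 8) + C * ∑ j, u j (x, t) ^ 2 := by
  obtain ⟨c, hc₀, hc⟩ := P.exists_sum_sq_coupling_le
  obtain ⟨δ, hδ, hδc⟩ : ∃ δ > 0, δ * c ≤ 1 / 8 := by
    refine ⟨1 / (8 * (c + 1)), by positivity, ?_⟩
    rw [div_mul_eq_mul_div, div_le_div_iff₀ (by positivity) (by positivity)]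
    linarith
  filter_upwards [eventually_all.2 fun i => eventually_lyapunovProduction_le (P.ρ_pos i)
    (P.κ_pos i) (hd i) hδ Q (D i) (A i)] with N hN
  obtain ⟨C, hC⟩ := (eventually_all.2 hN).exists
  refine ⟨Fintype.card ι * C, fun u q ξ hu hqξ x hx t ht hq hξ hξ' => ?_⟩
  have hcomponent (i : ι) : lyapunovProduction (P.ρ i) (P.κ i) N (q x) (ξ x) (deriv ξ x)
      (u i (x, t)) (∂ₓ (u i) (x, t)) (∂ₜ (u i) (x, t)) (∑ j, P.S i j * ∂ₓ (u j) (x, t))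
      (P.residual u i (x, t))
      ≤ -(energyDensity (P.ρ i) (P.κ i) (∂ₓ (u i) (x, t)) (∂ₜ (u i) (x, t)) / 4)
        + δ * (∑ j, P.S i j * ∂ₓ (u j) (x, t)) ^ 2 + C * ∑ j, u j (x, t) ^ 2 := by
    obtain ⟨e, F, he, heD, heW, hF, hresidual⟩ := hu.residual_eq i x hx t ht
    rw [hresidual]
    exact hC i _ _ _ _ _ _ _ e F _ hq hξ hξ'
      (Finset.single_le_sum (fun j _ => sq_nonneg (u j (x, t))) (Finset.mem_univ i)) he heD
      (fun hed => hqξ.eq_zero x fun hxW => hed.not_ge (heW hxW)) hF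
  have hsum := Finset.sum_le_sum fun i (_ : i ∈ Finset.univ) => hcomponent i
  simp only [Finset.sum_add_distrib, Finset.sum_neg_distrib, ← Finset.sum_div, ← Finset.mul_sum,
    Finset.sum_const, Finset.card_univ, nsmul_eq_mul] at hsum
  change P.productionAt N q ξ u (x, t) ≤ -(P.energyAt u (x, t) / 4) + _ + _ at hsum
  have hcoupling : δ * ∑ i, (∑ j, P.S i j * ∂ₓ (u j) (x, t)) ^ 2 ≤ P.energyAt u (x, t) / 8 := calc
    _ ≤ δ * (c * P.energyAt u (x, t)) := by
      gcongr
      exact hc u (x, t)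
    _ ≤ 1 / 8 * P.energyAt u (x, t) := by
      rw [← mul_assoc]
      exact mul_le_mul_of_nonneg_right hδc (P.energyAt_nonneg u (x, t))
    _ = P.energyAt u (x, t) / 8 := by ring
  linarith

theorem continuous_energyAt (hu : ∀ i, ContDiff ℝ 1 (u i)) : Continuous (P.energyAt u) := by
  unfold energyAt energyDensity
  have hxu (i : ι) : Continuous (∂ₓ (u i)) := (contDiff_partialX (hu i) (zero_add 1).le).continuous
  have htu (i : ι) : Continuous (∂ₜ (u i)) := (contDiff_partialT (hu i) (zero_add 1).le).continuous
  exact continuous_finsetSum _ fun i _ =>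
    (((htu i).pow 2).const_mul _).add (((hxu i).pow 2).const_mul _)

theorem normSq_nonneg (hL : 0 ≤ P.L) (u : ι → ℝ × ℝ → ℝ) (t : ℝ) : 0 ≤ P.normSq u t :=
  intervalIntegral.integral_nonneg hL fun _ _ => Finset.sum_nonneg fun _ _ => sq_nonneg _

theorem energy_nonneg (hL : 0 ≤ P.L) (u : ι → ℝ × ℝ → ℝ) (t : ℝ) : 0 ≤ P.energy u t :=
  intervalIntegral.integral_nonneg hL fun x _ => P.energyAt_nonneg u (x, t)

theorem integral_le_energy_add_normSq (hL : 0 ≤ P.L) (hu : ∀ i, ContDiff ℝ 1 (u i))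
    {F : ℝ × ℝ → ℝ} (hF : Continuous F) {t a c : ℝ}
    (hle : ∀ x ∈ Icc 0 P.L, F (x, t) ≤ a * P.energyAt u (x, t) + c * ∑ j, u j (x, t) ^ 2) :
    ∫ x in (0 : ℝ)..P.L, F (x, t) ≤ a * P.energy u t + c * P.normSq u t := by
  have integrable {G : ℝ × ℝ → ℝ} (hG : Continuous G) :
      IntervalIntegrable (fun x => G (x, t)) volume 0 P.L :=
    (hG.comp (Continuous.prodMk_left t)).intervalIntegrable _ _
  have henergy := (integrable (continuous_energyAt (P := P) hu)).const_mul a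
  have hnormSq := (integrable (G := fun z => ∑ j, u j z ^ 2)
    (continuous_finsetSum _ fun j _ => (hu j).continuous.pow 2)).const_mul c
  calc ∫ x in (0 : ℝ)..P.L, F (x, t)
      ≤ ∫ x in (0 : ℝ)..P.L, (a * P.energyAt u (x, t) + c * ∑ j, u j (x, t) ^ 2) :=
        intervalIntegral.integral_mono_on hL (integrable hF) (henergy.add hnormSq) hle
    _ = a * P.energy u t + c * P.normSq u t := by
        rw [intervalIntegral.integral_add henergy hnormSq, intervalIntegral.integral_const_mul,
          intervalIntegral.integral_const_mul, energy, normSq]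

theorem exists_lyapunov (hW : IsOpen W) (hne : W.Nonempty) (hWL : W ⊆ Icc 0 P.L)
    (hd : ∀ i, 0 < d i) (D A : ι → ℝ) :
    ∃ C, 0 < C ∧ ∃ N q ξ, IsLocalizedMultiplier P.L W q ξ ∧ ∀ u, P.IsDampedWave W d D A u →
      ∀ t, 0 ≤ t →
      P.energy u t - C * P.normSq u t ≤ P.lyapunov N q ξ u t ∧
      P.lyapunov N q ξ u t ≤ C * (P.energy u t + P.normSq u t) ∧
      ∫ x in (0 : ℝ)..P.L, P.productionAt N q ξ u (x, t)
        ≤ -(P.energy u t / 8) + C * P.normSq u t := by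
  obtain ⟨q, ξ, hqξ⟩ := exists_isLocalizedMultiplier hW hne hWL
  obtain ⟨Q, hQ⟩ := hqξ.exists_bound
  obtain ⟨N, ⟨C₁, hC₁, hbounds⟩, C₂, hproduction⟩ := ((P.eventually_lyapunovAt_bounds Q).and
    (eventually_productionAt_le (P := P) (W := W) hd D A Q)).exists
  have hL : 0 ≤ P.L := hne.elim fun x hx => (hWL hx).1.trans (hWL hx).2
  refine ⟨max C₁ C₂, lt_max_of_lt_left hC₁, N, q, ξ, hqξ, fun u hu t ht => ?_⟩
  have hu₁ (i : ι) : ContDiff ℝ 1 (u i) := (hu.contDiff i).of_le one_le_two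
  have hcont : Continuous (P.lyapunovAt N q ξ u) :=
    (contDiff_lyapunovAt hu.contDiff hqξ N).continuous
  have hlower := integral_le_energy_add_normSq hL hu₁ hcont.neg (a := -1) (c := C₁) (t := t)
    fun x hx => show -P.lyapunovAt N q ξ u (x, t) ≤ _ by
      linarith [(hbounds u q ξ (x, t) (hQ x hx).1 (hQ x hx).2.1).1]
  have hupper := integral_le_energy_add_normSq hL hu₁ hcont (a := C₁) (c := C₁) (t := t)
    fun x hx => by linarith [(hbounds u q ξ (x, t) (hQ x hx).1 (hQ x hx).2.1).2]
  have hdecay := integral_le_energy_add_normSq hL hu₁ (continuous_productionAt hu.contDiff hqξ N)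
    (t := t) (a := -(1 / 8)) (c := C₂) fun x hx => by
      linarith [hproduction u q ξ hu hqξ x hx t ht (hQ x hx).1 (hQ x hx).2.1 (hQ x hx).2.2]
  simp only [Pi.neg_apply, intervalIntegral.integral_neg] at hlower
  have hE := mul_le_mul_of_nonneg_right (le_max_left C₁ C₂) (energy_nonneg hL u t)
  have hn₁ := mul_le_mul_of_nonneg_right (le_max_left C₁ C₂) (normSq_nonneg hL u t)
  have hn₂ := mul_le_mul_of_nonneg_right (le_max_right C₁ C₂) (normSq_nonneg hL u t)
  unfold lyapunov
  refine ⟨?_, ?_, ?_⟩ <;> linarith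

theorem exists_energy_decay (hW : IsOpen W) (hne : W.Nonempty) (hWL : W ⊆ Icc 0 P.L)
    (hd : ∀ i, 0 < d i) (D A : ι → ℝ) :
    ∃ C ω : ℝ, 0 < C ∧ 0 < ω ∧ ∀ u, P.IsDampedWave W d D A u → ∀ T, 0 ≤ T → ∀ B,
      (∀ t ∈ Icc 0 T, P.normSq u t ≤ B) →
      P.energy u T ≤ C * (Real.exp (-ω * T) * P.energy u 0 + B) := by
  obtain ⟨C, hC, N, q, ξ, hqξ, hbounds⟩ := exists_lyapunov hW hne hWL hd D A
  have hL : 0 ≤ P.L := hne.elim fun x hx => (hWL hx).1.trans (hWL hx).2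
  refine ⟨3 * C + 8 * C ^ 2, 1 / (8 * C), by positivity, by positivity, fun u hu T hT B hB => ?_⟩
  have hB₀ : 0 ≤ B := (normSq_nonneg hL u 0).trans (hB 0 (left_mem_Icc.2 hT))
  have hE₀ : 0 ≤ P.energy u 0 := energy_nonneg hL u 0
  have hdecay := le_exp_mul_add_of_deriv_le (ω := 1 / (8 * C)) (ε := (C + 8 * C ^ 2) * B)
    (by positivity) hT (fun t ht => hu.hasDerivAt_lyapunov hqξ N ht.1)
    (fun t ht => by
      obtain ⟨-, hupper, hproduction⟩ := hbounds u hu t ht.1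
      have henergy : P.lyapunov N q ξ u t / C ≤ P.energy u t + P.normSq u t := by
        rwa [div_le_iff₀' hC]
      have hrhs : -(1 / (8 * C) * P.lyapunov N q ξ u t) + 1 / (8 * C) * ((C + 8 * C ^ 2) * B)
          = -(P.lyapunov N q ξ u t / C / 8) + (1 / 8 + C) * B := by
        field_simp
      rw [hrhs]
      linarith [hB t ht, mul_le_mul_of_nonneg_left (hB t ht) hC.le])
  have hinitial := (hbounds u hu 0 le_rfl).2.1
  have hfinal := (hbounds u hu T hT).1
  have hexp₀ := Real.exp_pos (-(1 / (8 * C)) * T)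
  have hexp₁ : Real.exp (-(1 / (8 * C)) * T) ≤ 1 :=
    Real.exp_le_one_iff.2 (mul_nonpos_of_nonpos_of_nonneg (neg_nonpos.2 (by positivity)) hT)
  generalize Real.exp (-(1 / (8 * C)) * T) = r at *
  have hstart : r * P.lyapunov N q ξ u 0 ≤ C * (r * P.energy u 0) + C * B := calc
    _ ≤ r * (C * (P.energy u 0 + B)) := by
      gcongr
      exact hinitial.trans (by gcongr; exact hB 0 (left_mem_Icc.2 hT))
    _ = C * (r * P.energy u 0) + r * (C * B) := by ring
    _ ≤ _ := by linarith [mul_le_of_le_one_left (by positivity : 0 ≤ C * B) hexp₁]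
  have hrE : 0 ≤ (2 * C + 8 * C ^ 2) * (r * P.energy u 0) := by positivity
  linarith [mul_le_mul_of_nonneg_left (hB T (right_mem_Icc.2 hT)) hC.le]

end SkewWaveSystem

/-- A damping `a(x) g(∂ₜu)` with `a` bounded and nonnegative on `[0, L]`, bounded away from zero
on `W`, and with the derivative of `g` between two positive constants. -/
structure IsLocalizedDamping (L : ℝ) (W : Set ℝ) (a g : ℝ → ℝ) : Prop where
  nonneg : ∀ x ∈ Icc 0 L, 0 ≤ a x
  exists_le : ∃ A, ∀ x ∈ Icc 0 L, a x ≤ A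
  exists_ge : ∃ a₀, 0 < a₀ ∧ ∀ x ∈ W, a₀ ≤ a x
  differentiable : Differentiable ℝ g
  deriv_bounds : ∃ m M, 0 < m ∧ ∀ s, m ≤ deriv g s ∧ deriv g s ≤ M

theorem exists_sub_eq_deriv_mul_sub {g : ℝ → ℝ} (hg : Differentiable ℝ g) (v v' : ℝ) :
    ∃ s, g v - g v' = deriv g s * (v - v') := by
  obtain ⟨s, -, hs⟩ := domain_mvt (s := univ) (x := v') (y := v)
    (fun s _ => (hg s).hasDerivAt.hasFDerivAt.hasFDerivWithinAt) convex_univ (mem_univ _)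
    (mem_univ _)
  exact ⟨s, by simpa [mul_comm] using hs⟩

theorem IsLocalizedDamping.exists_linearization {L : ℝ} {W : Set ℝ} {a g : ℝ → ℝ}
    (h : IsLocalizedDamping L W a g) :
    ∃ d D, 0 < d ∧ ∀ x ∈ Icc 0 L, ∀ v v', ∃ e, 0 ≤ e ∧ e ≤ D ∧ (x ∈ W → d ≤ e) ∧
      a x * g v - a x * g v' = e * (v - v') := by
  obtain ⟨A, hA⟩ := h.exists_le
  obtain ⟨a₀, ha₀, haW⟩ := h.exists_ge
  obtain ⟨m, M, hm, hmM⟩ := h.deriv_bounds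
  refine ⟨a₀ * m, A * M, by positivity, fun x hx v v' => ?_⟩
  obtain ⟨s, hs⟩ := exists_sub_eq_deriv_mul_sub h.differentiable v v'
  have ha := h.nonneg x hx
  have hs₀ : 0 ≤ deriv g s := hm.le.trans (hmM s).1
  exact ⟨a x * deriv g s, mul_nonneg ha hs₀,
    mul_le_mul (hA x hx) (hmM s).2 hs₀ (ha.trans (hA x hx)),
    fun hxW => mul_le_mul (haW x hxW) (hmM s).1 hm.le ha,
    by rw [← mul_sub, hs, mul_assoc]⟩

theorem sq_norm_le_sum_sq {ι : Type*} [Fintype ι] (a : ι → ℝ) : ‖a‖ ^ 2 ≤ ∑ j, a j ^ 2 := by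
  have hsum : 0 ≤ ∑ j, a j ^ 2 := Finset.sum_nonneg fun j _ => sq_nonneg _
  rw [← Real.le_sqrt (norm_nonneg a) hsum, pi_norm_le_iff_of_nonneg (Real.sqrt_nonneg _)]
  exact fun i => Real.abs_le_sqrt
    (Finset.single_le_sum (f := fun j => a j ^ 2) (fun j _ => sq_nonneg _) (Finset.mem_univ i))

namespace SkewWaveSystem

variable {ι : Type*} [Fintype ι] (P : SkewWaveSystem ι)

/-- `u` is a `C²` solution, for nonnegative times and with Dirichlet conditions, of the wave
system with damping terms `aᵢ(x) gᵢ(∂ₜuᵢ)` and nonlinear zeroth-order terms `Φᵢ(u)`. -/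
structure IsSemilinearWave (a g : ι → ℝ → ℝ) (Φ : ι → (ι → ℝ) → ℝ) (u : ι → ℝ × ℝ → ℝ) :
    Prop where
  contDiff : ∀ i, ContDiff ℝ 2 (u i)
  left : ∀ i t, 0 ≤ t → u i (0, t) = 0
  right : ∀ i t, 0 ≤ t → u i (P.L, t) = 0
  residual_eq : ∀ i, ∀ x ∈ Icc 0 P.L, ∀ t, 0 ≤ t →
    P.residual u i (x, t) = a i x * g i (∂ₜ (u i) (x, t)) + Φ i fun j => u j (x, t)

variable {P} {u v : ι → ℝ × ℝ → ℝ} {W : Set ℝ} {a g : ι → ℝ → ℝ} {Φ : ι → (ι → ℝ) → ℝ}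

theorem residual_sub (hu : ∀ i, ContDiff ℝ 2 (u i)) (hv : ∀ i, ContDiff ℝ 2 (v i)) (i : ι)
    (z : ℝ × ℝ) : P.residual (u - v) i z = P.residual u i z - P.residual v i z := by
  have hdx {w : ι → ℝ × ℝ → ℝ} (hw : ∀ i, ContDiff ℝ 2 (w i)) (i : ι) :
      Differentiable ℝ (∂ₓ (w i)) :=
    (contDiff_partialX (hw i) one_add_one_eq_two.le).differentiable_one
  have hdt {w : ι → ℝ × ℝ → ℝ} (hw : ∀ i, ContDiff ℝ 2 (w i)) (i : ι) :
      Differentiable ℝ (∂ₜ (w i)) :=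
    (contDiff_partialT (hw i) one_add_one_eq_two.le).differentiable_one
  have hd {w : ι → ℝ × ℝ → ℝ} (hw : ∀ i, ContDiff ℝ 2 (w i)) (i : ι) : Differentiable ℝ (w i) :=
    (hw i).differentiable two_ne_zero
  simp only [residual, Pi.sub_apply, partialX_sub (hd hu _) (hd hv _),
    partialT_sub (hd hu _) (hd hv _), partialX_sub (hdx hu _) (hdx hv _),
    partialT_sub (hdt hu _) (hdt hv _), mul_sub, Finset.sum_sub_distrib]
  ring

theorem exists_isDampedWave_sub (hdamping : ∀ i, IsLocalizedDamping P.L W (a i) (g i))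
    (hΦ : ∀ i, LocallyLipschitz (Φ i)) (K : ℝ) :
    ∃ d D A : ι → ℝ, (∀ i, 0 < d i) ∧ ∀ u v, P.IsSemilinearWave a g Φ u →
      P.IsSemilinearWave a g Φ v → (∀ i, ∀ x ∈ Icc 0 P.L, ∀ t, 0 ≤ t → |u i (x, t)| ≤ K) →
      (∀ i, ∀ x ∈ Icc 0 P.L, ∀ t, 0 ≤ t → |v i (x, t)| ≤ K) → P.IsDampedWave W d D A (u - v) := by
  choose d D hd he using fun i => (hdamping i).exists_linearization
  choose C hC using fun i => (hΦ i).locallyLipschitzOn.exists_lipschitzOnWith_of_compact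
    (isCompact_closedBall (0 : ι → ℝ) K)
  refine ⟨d, D, fun i => (C i : ℝ) ^ 2, hd, fun u v hu hv huK hvK =>
    ⟨fun i => (hu.contDiff i).sub (hv.contDiff i), fun i t ht => ?_, fun i t ht => ?_,
      fun i x hx t ht => ?_⟩⟩
  · simp [hu.left i t ht, hv.left i t ht]
  · simp [hu.right i t ht, hv.right i t ht]
  obtain ⟨e, he₀, heD, heW, hdiff⟩ := he i x hx (∂ₜ (u i) (x, t)) (∂ₜ (v i) (x, t))
  refine ⟨e, Φ i (fun j => u j (x, t)) - Φ i (fun j => v j (x, t)), he₀, heD, heW, ?_, ?_⟩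
  · have mem_ball {w : ι → ℝ × ℝ → ℝ} (hw : ∀ i, ∀ x ∈ Icc 0 P.L, ∀ t, 0 ≤ t → |w i (x, t)| ≤ K) :
        (fun j => w j (x, t)) ∈ Metric.closedBall (0 : ι → ℝ) K :=
      mem_closedBall_zero_iff.2 <| (pi_norm_le_iff_of_nonneg
        ((abs_nonneg _).trans (hw i x hx t ht))).2 fun j => hw j x hx t ht
    have hlip := (hC i).norm_sub_le (mem_ball huK) (mem_ball hvK)
    calc _ ≤ (C i * ‖fun j => (u - v) j (x, t)‖) ^ 2 := sq_le_sq' (neg_le_of_abs_le hlip)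
          (le_of_abs_le hlip)
      _ = (C i : ℝ) ^ 2 * ‖fun j => (u - v) j (x, t)‖ ^ 2 := mul_pow _ _ _
      _ ≤ _ := by
        gcongr
        exact sq_norm_le_sum_sq _
  · rw [residual_sub hu.contDiff hv.contDiff, hu.residual_eq i x hx t ht,
      hv.residual_eq i x hx t ht, Pi.sub_apply,
      partialT_sub ((hu.contDiff i).differentiable two_ne_zero)
        ((hv.contDiff i).differentiable two_ne_zero), Pi.sub_apply, ← hdiff]
    ring

theorem exists_energy_sub_decay (hW : IsOpen W) (hne : W.Nonempty) (hWL : W ⊆ Icc 0 P.L)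
    (hdamping : ∀ i, IsLocalizedDamping P.L W (a i) (g i)) (hΦ : ∀ i, LocallyLipschitz (Φ i))
    (K : ℝ) :
    ∃ C ω : ℝ, 0 < C ∧ 0 < ω ∧ ∀ u v, P.IsSemilinearWave a g Φ u →
      P.IsSemilinearWave a g Φ v → (∀ i, ∀ x ∈ Icc 0 P.L, ∀ t, 0 ≤ t → |u i (x, t)| ≤ K) →
      (∀ i, ∀ x ∈ Icc 0 P.L, ∀ t, 0 ≤ t → |v i (x, t)| ≤ K) → ∀ T, 0 ≤ T → ∀ B,
      (∀ t ∈ Icc 0 T, P.normSq (u - v) t ≤ B) →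
      P.energy (u - v) T ≤ C * (Real.exp (-ω * T) * P.energy (u - v) 0 + B) := by
  obtain ⟨d, D, A, hd, hsub⟩ := exists_isDampedWave_sub hdamping hΦ K
  obtain ⟨C, ω, hC, hω, hdecay⟩ := exists_energy_decay hW hne hWL hd D A
  exact ⟨C, ω, hC, hω, fun u v hu hv huK hvK => hdecay (u - v) (hsub u v hu hv huK hvK)⟩

variable (P) in
/-- The sum of the squared `L²ᵖ(0, L)` norms of the displacements at time `t`. -/
def lpNormSq (p : ℝ) (u : ι → ℝ × ℝ → ℝ) (t : ℝ) : ℝ :=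
  ∑ i, (∫ x in (0 : ℝ)..P.L, |u i (x, t)| ^ (2 * p)) ^ (1 / p)

theorem lpNormSq_nonneg (hL : 0 ≤ P.L) (p : ℝ) (u : ι → ℝ × ℝ → ℝ) (t : ℝ) :
    0 ≤ P.lpNormSq p u t :=
  Finset.sum_nonneg fun _ _ => Real.rpow_nonneg
    (intervalIntegral.integral_nonneg hL fun _ _ => Real.rpow_nonneg (abs_nonneg _) _) _

theorem continuous_lpNormSq (hu : ∀ i, Continuous (u i)) {p : ℝ} (hp : 0 ≤ p) :
    Continuous (P.lpNormSq p u) := by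
  refine continuous_finsetSum _ fun i _ => Continuous.rpow_const ?_ fun _ => Or.inr (by positivity)
  refine intervalIntegral.continuous_parametric_intervalIntegral_of_continuous' ?_ _ _
  exact ((hu i).comp continuous_swap).abs.rpow_const fun _ => Or.inr (by positivity)

theorem normSq_le_lpNormSq (hL : 0 < P.L) {p : ℝ} (hp : 1 ≤ p) (hu : ∀ i, Continuous (u i))
    (t : ℝ) : P.normSq u t ≤ P.L ^ (1 - 1 / p) * P.lpNormSq p u t := by
  have hslice (i : ι) : Continuous fun x => u i (x, t) := (hu i).comp (Continuous.prodMk_left t)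
  rw [normSq, intervalIntegral.integral_finsetSum
    fun i _ => ((hslice i).fun_pow 2).intervalIntegrable _ _, lpNormSq, Finset.mul_sum]
  gcongr with i
  simpa using integral_sq_le_mul_rpow_integral_rpow hL hp (hslice i)

theorem normSq_le_sSup_lpNormSq (hL : 0 < P.L) {p : ℝ} (hp : 1 ≤ p) (hu : ∀ i, Continuous (u i))
    {T t : ℝ} (ht : t ∈ Icc 0 T) :
    P.normSq u t ≤ P.L ^ (1 - 1 / p) * sSup (P.lpNormSq p u '' Icc 0 T) := by
  have hbdd : BddAbove (P.lpNormSq p u '' Icc 0 T) :=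
    isCompact_Icc.bddAbove_image (continuous_lpNormSq hu (zero_le_one.trans hp)).continuousOn
  calc P.normSq u t ≤ P.L ^ (1 - 1 / p) * P.lpNormSq p u t := normSq_le_lpNormSq hL hp hu t
    _ ≤ _ := by
      gcongr
      exact le_csSup hbdd (mem_image_of_mem _ ht)

end SkewWaveSystem

theorem mul_add_sq_le {κ y c V : ℝ} (hκ : 0 ≤ κ) (hc : c ^ 2 ≤ V) :
    κ * (y + c) ^ 2 ≤ 3 * (κ * y ^ 2) + 3 * κ * V := calc
  κ * (y + c) ^ 2 ≤ κ * (3 * y ^ 2 + 3 * V) := by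
    gcongr
    nlinarith [sq_nonneg (y - c)]
  _ = _ := by ring

/-- The coefficients of the Bresse system. -/
structure BresseCoefficients where
  (ρ₁ ρ₂ k k₀ b ℓ L : ℝ)
  ρ₁_pos : 0 < ρ₁
  ρ₂_pos : 0 < ρ₂
  k_pos : 0 < k
  k₀_pos : 0 < k₀
  b_pos : 0 < b
  L_pos : 0 < L

namespace BresseCoefficients

variable (B : BresseCoefficients)

/-- The Bresse system for `u = (φ, ψ, w)` as a skew-coupled wave system: expanding the shear force
`k (φₓ + ψ + ℓ w)` and the axial force `k₀ (wₓ - ℓ φ)` leaves the first-order coupling `S`. -/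
@[simps]
def system : SkewWaveSystem (Fin 3) where
  L := B.L
  ρ := ![B.ρ₁, B.ρ₂, B.ρ₁]
  κ := ![B.k, B.b, B.k₀]
  S := ![![0, B.k, (B.k + B.k₀) * B.ℓ], ![-B.k, 0, 0], ![-((B.k + B.k₀) * B.ℓ), 0, 0]]
  ρ_pos i := by fin_cases i <;> simp [B.ρ₁_pos, B.ρ₂_pos]
  κ_pos i := by fin_cases i <;> simp [B.k_pos, B.k₀_pos, B.b_pos]
  skew i j := by fin_cases i <;> fin_cases j <;> simp

/-- The integrand of `∥·∥²_H` for the fields `u = (φ, ψ, w)`. -/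
def stateDensity (u : Fin 3 → ℝ × ℝ → ℝ) (z : ℝ × ℝ) : ℝ :=
  B.ρ₁ * ∂ₜ (u 0) z ^ 2 + B.ρ₂ * ∂ₜ (u 1) z ^ 2 + B.ρ₁ * ∂ₜ (u 2) z ^ 2
    + B.b * ∂ₓ (u 1) z ^ 2 + B.k * (∂ₓ (u 0) z + u 1 z + B.ℓ * u 2 z) ^ 2
    + B.k₀ * (∂ₓ (u 2) z - B.ℓ * u 0 z) ^ 2

/-- `∥·∥²_H` for the fields `u = (φ, ψ, w)`. -/
def stateNormSq (u : Fin 3 → ℝ × ℝ → ℝ) (t : ℝ) : ℝ :=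
  ∫ x in (0 : ℝ)..B.L, B.stateDensity u (x, t)

variable {B} {u v : Fin 3 → ℝ × ℝ → ℝ}

theorem stateDensity_nonneg (z : ℝ × ℝ) : 0 ≤ B.stateDensity u z := by
  have := B.ρ₁_pos
  have := B.ρ₂_pos
  have := B.k_pos
  have := B.k₀_pos
  have := B.b_pos
  unfold stateDensity
  positivity

theorem stateNormSq_nonneg (t : ℝ) : 0 ≤ B.stateNormSq u t :=
  intervalIntegral.integral_nonneg B.L_pos.le fun x _ => stateDensity_nonneg (x, t)

theorem continuous_stateDensity (hu : ∀ i, ContDiff ℝ 1 (u i)) :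
    Continuous (B.stateDensity u) := by
  have hc (i : Fin 3) : Continuous (u i) := (hu i).continuous
  have hx (i : Fin 3) : Continuous (∂ₓ (u i)) :=
    (contDiff_partialX (hu i) (zero_add 1).le).continuous
  have ht (i : Fin 3) : Continuous (∂ₜ (u i)) :=
    (contDiff_partialT (hu i) (zero_add 1).le).continuous
  unfold stateDensity
  fun_prop

theorem energyAt_system (z : ℝ × ℝ) :
    B.system.energyAt u z
      = B.ρ₁ * ∂ₜ (u 0) z ^ 2 + B.ρ₂ * ∂ₜ (u 1) z ^ 2 + B.ρ₁ * ∂ₜ (u 2) z ^ 2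
        + B.b * ∂ₓ (u 1) z ^ 2 + B.k * ∂ₓ (u 0) z ^ 2 + B.k₀ * ∂ₓ (u 2) z ^ 2 := by
  simp [SkewWaveSystem.energyAt, energyDensity, Fin.sum_univ_three]
  ring

theorem exists_stateDensity_energyAt_comparison (B : BresseCoefficients) :
    ∃ C, 0 < C ∧ ∀ (u : Fin 3 → ℝ × ℝ → ℝ) (z : ℝ × ℝ),
      B.stateDensity u z ≤ 3 * B.system.energyAt u z + C * ∑ j, u j z ^ 2 ∧
        B.system.energyAt u z ≤ 3 * B.stateDensity u z + C * ∑ j, u j z ^ 2 := by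
  have hk := B.k_pos
  have hk₀ := B.k₀_pos
  refine ⟨3 * (B.k + B.k₀) * (1 + B.ℓ ^ 2), by positivity, fun u z => ?_⟩
  rw [energyAt_system, stateDensity, Fin.sum_univ_three]
  set V := (1 + B.ℓ ^ 2) * (u 0 z ^ 2 + u 1 z ^ 2 + u 2 z ^ 2) with hV
  have hshear : (u 1 z + B.ℓ * u 2 z) ^ 2 ≤ V := by
    nlinarith [sq_nonneg (B.ℓ * u 1 z - u 2 z), sq_nonneg (u 0 z), sq_nonneg (B.ℓ * u 0 z)]
  have haxial : (-(B.ℓ * u 0 z)) ^ 2 ≤ V := by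
    nlinarith [sq_nonneg (B.ℓ * u 1 z), sq_nonneg (B.ℓ * u 2 z), sq_nonneg (u 0 z),
      sq_nonneg (u 1 z), sq_nonneg (u 2 z)]
  have hshear_le := mul_add_sq_le (y := ∂ₓ (u 0) z) hk.le hshear
  have haxial_le := mul_add_sq_le (y := ∂ₓ (u 2) z) hk₀.le haxial
  have hle_shear := mul_add_sq_le (y := ∂ₓ (u 0) z + (u 1 z + B.ℓ * u 2 z)) hk.le
    ((neg_sq _).trans_le hshear)
  have hle_axial := mul_add_sq_le (y := ∂ₓ (u 2) z + -(B.ℓ * u 0 z)) hk₀.le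
    ((neg_sq _).trans_le haxial)
  simp only [← add_assoc, ← sub_eq_add_neg] at hshear_le haxial_le hle_shear hle_axial
  have hφ := mul_nonneg B.ρ₁_pos.le (sq_nonneg (∂ₜ (u 0) z))
  have hψ := mul_nonneg B.ρ₂_pos.le (sq_nonneg (∂ₜ (u 1) z))
  have hw := mul_nonneg B.ρ₁_pos.le (sq_nonneg (∂ₜ (u 2) z))
  have hψx := mul_nonneg B.b_pos.le (sq_nonneg (∂ₓ (u 1) z))
  rw [mul_assoc (3 * (B.k + B.k₀)), ← hV]
  constructor <;> linarith

theorem exists_stateNormSq_energy_comparison (B : BresseCoefficients) :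
    ∃ C, 0 < C ∧ ∀ u : Fin 3 → ℝ × ℝ → ℝ, (∀ i, ContDiff ℝ 1 (u i)) → ∀ t,
      B.stateNormSq u t ≤ 3 * B.system.energy u t + C * B.system.normSq u t ∧
        B.system.energy u t ≤ 3 * B.stateNormSq u t + C * B.system.normSq u t := by
  obtain ⟨C, hC, hdensity⟩ := B.exists_stateDensity_energyAt_comparison
  refine ⟨C, hC, fun u hu t => ⟨?_, ?_⟩⟩
  · exact SkewWaveSystem.integral_le_energy_add_normSq B.L_pos.le hu (continuous_stateDensity hu)
      fun x _ => (hdensity u (x, t)).1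
  · have hneg := SkewWaveSystem.integral_le_energy_add_normSq (P := B.system) (t := t)
      (F := fun z => -B.stateDensity u z) (a := -(1 / 3)) (c := C / 3) B.L_pos.le hu
      (continuous_stateDensity hu).neg fun x _ => by linarith [(hdensity u (x, t)).2]
    rw [intervalIntegral.integral_neg] at hneg
    change -B.stateNormSq u t ≤ _ at hneg
    linarith

theorem exists_sum_mul_partialX_le (B : BresseCoefficients) :
    ∃ C, 0 ≤ C ∧ ∀ (u : Fin 3 → ℝ × ℝ → ℝ) (z : ℝ × ℝ),
      ∑ i, 2 * u i z * ∂ₓ (u i) z ≤ 2 * ∑ i, u i z ^ 2 + C * B.stateDensity u z := by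
  have hk := B.k_pos
  have hk₀ := B.k₀_pos
  have hb := B.b_pos
  refine ⟨B.k⁻¹ + B.b⁻¹ + B.k₀⁻¹, by positivity, fun u z => ?_⟩
  set y := ∂ₓ (u 0) z + u 1 z + B.ℓ * u 2 z with hy
  set r := ∂ₓ (u 2) z - B.ℓ * u 0 z with hr
  have hkinetic : 0 ≤ B.ρ₁ * ∂ₜ (u 0) z ^ 2 + B.ρ₂ * ∂ₜ (u 1) z ^ 2 + B.ρ₁ * ∂ₜ (u 2) z ^ 2 := by
    have hρ₁ := B.ρ₁_pos
    have hρ₂ := B.ρ₂_pos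
    positivity
  have hforces : B.b * ∂ₓ (u 1) z ^ 2 + B.k * y ^ 2 + B.k₀ * r ^ 2 ≤ B.stateDensity u z := by
    rw [stateDensity, ← hy, ← hr]
    linarith
  have hψ := mul_nonneg hb.le (sq_nonneg (∂ₓ (u 1) z))
  have hy_nonneg := mul_nonneg hk.le (sq_nonneg y)
  have hr_nonneg := mul_nonneg hk₀.le (sq_nonneg r)
  have hy_le : y ^ 2 ≤ B.k⁻¹ * B.stateDensity u z := by
    rw [le_inv_mul_iff₀ hk]
    linarith
  have hψ_le : ∂ₓ (u 1) z ^ 2 ≤ B.b⁻¹ * B.stateDensity u z := by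
    rw [le_inv_mul_iff₀ hb]
    linarith
  have hr_le : r ^ 2 ≤ B.k₀⁻¹ * B.stateDensity u z := by
    rw [le_inv_mul_iff₀ hk₀]
    linarith
  -- The curvature terms `∓ 2 ℓ φ w` cancel, so that the growth rate `2` is independent of `ℓ`.
  have hexpand : ∑ i, 2 * u i z * ∂ₓ (u i) z
      = 2 * u 0 z * y - 2 * u 0 z * u 1 z + 2 * u 1 z * ∂ₓ (u 1) z + 2 * u 2 z * r := by
    rw [Fin.sum_univ_three, hy, hr]
    ring
  rw [hexpand, Fin.sum_univ_three]
  linarith [two_mul_le_add_sq (u 0 z) y, two_mul_le_add_sq (u 1 z) (∂ₓ (u 1) z),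
    two_mul_le_add_sq (u 2 z) r, two_mul_le_add_sq (-u 0 z) (u 1 z), neg_sq (u 0 z),
    sq_nonneg (u 2 z)]

theorem exists_abs_le_of_stateNormSq_le (B : BresseCoefficients) (M : ℝ) :
    ∃ K, ∀ u : Fin 3 → ℝ × ℝ → ℝ, (∀ i, ContDiff ℝ 1 (u i)) → ∀ t, (∀ i, u i (0, t) = 0) →
      B.stateNormSq u t ≤ M → ∀ i, ∀ x ∈ Icc 0 B.L, |u i (x, t)| ≤ K := by
  obtain ⟨C, hC, hgrowth⟩ := B.exists_sum_mul_partialX_le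
  refine ⟨√(Real.exp (2 * B.L) * (C * M)), fun u hu t hleft hM i x hx => Real.abs_le_sqrt ?_⟩
  have hdensity : Continuous fun s => C * B.stateDensity u (s, t) :=
    continuous_const.mul ((continuous_stateDensity hu).comp (by fun_prop))
  have hderiv (s : ℝ) :
      HasDerivAt (fun y => ∑ j, u j (y, t) ^ 2) (∑ j, 2 * u j (s, t) * ∂ₓ (u j) (s, t)) s := by
    refine HasDerivAt.fun_sum fun j _ => ?_
    simpa using (hasDerivAt_partialX ((hu j).differentiable one_ne_zero) s t).fun_pow 2
  have hgronwall := le_exp_mul_add_integral_of_deriv_le zero_le_two hx.1 (fun s _ => hderiv s)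
    hdensity (fun s => mul_nonneg hC (stateDensity_nonneg _)) fun s _ => hgrowth u (s, t)
  have hforcing : ∫ s in (0 : ℝ)..x, C * B.stateDensity u (s, t) ≤ C * M := calc
    _ ≤ ∫ s in (0 : ℝ)..B.L, C * B.stateDensity u (s, t) :=
      intervalIntegral.integral_mono_interval le_rfl hx.1 hx.2
        (Eventually.of_forall fun s => mul_nonneg hC (stateDensity_nonneg _))
        (hdensity.intervalIntegrable _ _)
    _ = C * B.stateNormSq u t := intervalIntegral.integral_const_mul _ _
    _ ≤ C * M := mul_le_mul_of_nonneg_left hM hC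
  have hM_nonneg : 0 ≤ C * M := mul_nonneg hC ((stateNormSq_nonneg t).trans hM)
  calc
    u i (x, t) ^ 2 ≤ ∑ j, u j (x, t) ^ 2 :=
      Finset.single_le_sum (f := fun j => u j (x, t) ^ 2) (fun j _ => sq_nonneg _)
        (Finset.mem_univ i)
    _ ≤ Real.exp (2 * x) * (0 + C * M) := by
      refine hgronwall.trans
        (mul_le_mul_of_nonneg_left (add_le_add ?_ hforcing) (Real.exp_pos _).le)
      simp [hleft]
    _ ≤ Real.exp (2 * B.L) * (C * M) := by
      rw [zero_add]
      gcongr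
      exact hx.2

section

variable {W : Set ℝ} {a g : Fin 3 → ℝ → ℝ} {Φ : Fin 3 → (Fin 3 → ℝ) → ℝ}

theorem exists_stateNormSq_sub_decay (hW : IsOpen W) (hne : W.Nonempty) (hWL : W ⊆ Icc 0 B.L)
    (hdamping : ∀ i, IsLocalizedDamping B.L W (a i) (g i)) (hΦ : ∀ i, LocallyLipschitz (Φ i))
    (M : ℝ) :
    ∃ C ω : ℝ, 0 < C ∧ 0 < ω ∧ ∀ u v, B.system.IsSemilinearWave a g Φ u →
      B.system.IsSemilinearWave a g Φ v → (∀ t, 0 ≤ t → B.stateNormSq u t ≤ M) →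
      (∀ t, 0 ≤ t → B.stateNormSq v t ≤ M) → ∀ T, 0 ≤ T → ∀ S,
      (∀ t ∈ Icc 0 T, B.system.normSq (u - v) t ≤ S) →
      B.stateNormSq (u - v) T ≤ C * (Real.exp (-ω * T) * B.stateNormSq (u - v) 0 + S) := by
  obtain ⟨K, hK⟩ := B.exists_abs_le_of_stateNormSq_le M
  obtain ⟨C, hC, hcompare⟩ := B.exists_stateNormSq_energy_comparison
  obtain ⟨D, ω, hD, hω, hdecay⟩ :=
    SkewWaveSystem.exists_energy_sub_decay (P := B.system) hW hne hWL hdamping hΦ K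
  refine ⟨9 * D + (3 * D * C + 3 * D + C), ω, by positivity, hω,
    fun u v hu hv huM hvM T hT S hnorm => ?_⟩
  have hu₁ (i : Fin 3) : ContDiff ℝ 1 (u i) := (hu.contDiff i).of_le one_le_two
  have hv₁ (i : Fin 3) : ContDiff ℝ 1 (v i) := (hv.contDiff i).of_le one_le_two
  have hd₁ (i : Fin 3) : ContDiff ℝ 1 ((u - v) i) := (hu₁ i).sub (hv₁ i)
  have henergy := hdecay u v hu hv
    (fun i x hx t ht => hK u hu₁ t (fun j => hu.left j t ht) (huM t ht) i x hx)
    (fun i x hx t ht => hK v hv₁ t (fun j => hv.left j t ht) (hvM t ht) i x hx) T hT S hnorm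
  have hstate := (hcompare _ hd₁ T).1
  have hinit := (hcompare _ hd₁ 0).2
  have hnorm_T := hnorm T (right_mem_Icc.2 hT)
  have hnorm_zero := hnorm 0 (left_mem_Icc.2 hT)
  have hS : 0 ≤ S := (SkewWaveSystem.normSq_nonneg B.L_pos.le _ _).trans hnorm_T
  have hstate_zero : 0 ≤ B.stateNormSq (u - v) 0 := stateNormSq_nonneg 0
  have hexp : Real.exp (-ω * T) ≤ 1 := Real.exp_le_one_iff.2 (by nlinarith)
  have he := Real.exp_pos (-ω * T)
  set e := Real.exp (-ω * T)
  calc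
    B.stateNormSq (u - v) T ≤ 3 * (D * (e * B.system.energy (u - v) 0 + S)) + C * S :=
      hstate.trans (by gcongr)
    _ ≤ 3 * (D * (e * (3 * B.stateNormSq (u - v) 0 + C * S) + S)) + C * S := by
      gcongr
      exact hinit.trans (by gcongr)
    _ ≤ 9 * D * (e * B.stateNormSq (u - v) 0) + (3 * D * C + 3 * D + C) * S := by
      linarith [mul_le_mul_of_nonneg_right hexp (by positivity : 0 ≤ D * C * S)]
    _ ≤ (9 * D + (3 * D * C + 3 * D + C)) * (e * B.stateNormSq (u - v) 0 + S) := by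
      have hcross : 0 ≤ 9 * D * S + (3 * D * C + 3 * D + C) * (e * B.stateNormSq (u - v) 0) := by
        positivity
      linarith

theorem exists_quasistability (hW : IsOpen W) (hne : W.Nonempty) (hWL : W ⊆ Icc 0 B.L)
    (hdamping : ∀ i, IsLocalizedDamping B.L W (a i) (g i)) (hΦ : ∀ i, LocallyLipschitz (Φ i))
    {p : ℝ} (hp : 1 ≤ p) (M : ℝ) :
    ∃ c ω : ℝ, 0 < c ∧ 0 < ω ∧ ∀ u v, B.system.IsSemilinearWave a g Φ u →
      B.system.IsSemilinearWave a g Φ v → (∀ t, 0 ≤ t → B.stateNormSq u t ≤ M) →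
      (∀ t, 0 ≤ t → B.stateNormSq v t ≤ M) → ∀ T, 0 ≤ T →
      B.stateNormSq (u - v) T ≤ c * Real.exp (-ω * T) * B.stateNormSq (u - v) 0
        + c * sSup (B.system.lpNormSq p (u - v) '' Icc 0 T) := by
  obtain ⟨C, ω, hC, hω, hdecay⟩ := exists_stateNormSq_sub_decay hW hne hWL hdamping hΦ M
  have hL := B.L_pos
  set r := B.L ^ (1 - 1 / p)
  refine ⟨C * (1 + r), ω, by positivity, hω, fun u v hu hv huM hvM T hT => ?_⟩
  have hsub (i : Fin 3) : Continuous ((u - v) i) :=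
    (hu.contDiff i).continuous.sub (hv.contDiff i).continuous
  set S := sSup (B.system.lpNormSq p (u - v) '' Icc 0 T)
  have hS : 0 ≤ S := Real.sSup_nonneg <| forall_mem_image.2 fun t _ =>
    SkewWaveSystem.lpNormSq_nonneg hL.le p (u - v) t
  have hinit : 0 ≤ B.stateNormSq (u - v) 0 := stateNormSq_nonneg 0
  calc
    B.stateNormSq (u - v) T ≤ C * (Real.exp (-ω * T) * B.stateNormSq (u - v) 0 + r * S) :=
      hdecay u v hu hv huM hvM T hT (r * S) fun t ht =>
        SkewWaveSystem.normSq_le_sSup_lpNormSq hL hp hsub ht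
    _ = C * Real.exp (-ω * T) * B.stateNormSq (u - v) 0 + C * r * S := by ring
    _ ≤ _ := by
      gcongr
      · exact le_mul_of_one_le_right hC.le (le_add_of_nonneg_right (by positivity))
      · exact le_add_of_nonneg_left zero_le_one

end

variable (B) in
/-- The zeroth-order terms of the Bresse equations: those left over by expanding the shear and
axial forces, plus the nonlinearities `f₁, f₂, f₃`. -/
def force (f₁ f₂ f₃ : ℝ → ℝ → ℝ → ℝ) : Fin 3 → (Fin 3 → ℝ) → ℝ :=
  ![fun y => B.k₀ * B.ℓ ^ 2 * y 0 + f₁ (y 0) (y 1) (y 2),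
    fun y => B.k * (y 1 + B.ℓ * y 2) + f₂ (y 0) (y 1) (y 2),
    fun y => B.k * B.ℓ * (y 1 + B.ℓ * y 2) + f₃ (y 0) (y 1) (y 2)]

theorem locallyLipschitz_force {f₁ f₂ f₃ : ℝ → ℝ → ℝ → ℝ}
    (hf₁ : LocallyLipschitz fun z : ℝ × ℝ × ℝ => f₁ z.1 z.2.1 z.2.2)
    (hf₂ : LocallyLipschitz fun z : ℝ × ℝ × ℝ => f₂ z.1 z.2.1 z.2.2)
    (hf₃ : LocallyLipschitz fun z : ℝ × ℝ × ℝ => f₃ z.1 z.2.1 z.2.2) (i : Fin 3) :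
    LocallyLipschitz (B.force f₁ f₂ f₃ i) := by
  have htriple : LocallyLipschitz fun y : Fin 3 → ℝ => (y 0, y 1, y 2) :=
    ContDiff.locallyLipschitz (𝕂 := ℝ) (by fun_prop)
  have hlinear {l : (Fin 3 → ℝ) → ℝ} (hl : ContDiff ℝ 1 l) : LocallyLipschitz l :=
    hl.locallyLipschitz
  fin_cases i
  · exact (hlinear (l := fun y => B.k₀ * B.ℓ ^ 2 * y 0) (by fun_prop)).add (hf₁.comp htriple)
  · exact (hlinear (l := fun y => B.k * (y 1 + B.ℓ * y 2)) (by fun_prop)).add (hf₂.comp htriple)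
  · exact (hlinear (l := fun y => B.k * B.ℓ * (y 1 + B.ℓ * y 2)) (by fun_prop)).add
      (hf₃.comp htriple)

/-- The displacements `φ, ψ, w` as a family of fields on space-time. -/
def fields (φ ψ w : ℝ → ℝ → ℝ) : Fin 3 → ℝ × ℝ → ℝ :=
  ![fun z => φ z.1 z.2, fun z => ψ z.1 z.2, fun z => w z.1 z.2]

theorem fields_sub (φ₁ ψ₁ w₁ φ₂ ψ₂ w₂ : ℝ → ℝ → ℝ) :
    fields (fun x s => φ₁ x s - φ₂ x s) (fun x s => ψ₁ x s - ψ₂ x s) (fun x s => w₁ x s - w₂ x s)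
      = fields φ₁ ψ₁ w₁ - fields φ₂ ψ₂ w₂ := by
  ext i z
  fin_cases i <;> rfl

theorem hnormSq_eq_stateNormSq {φ ψ w : ℝ → ℝ → ℝ} (h : ∀ i, ContDiff ℝ 1 (fields φ ψ w i))
    (t : ℝ) :
    HnormSq B.ρ₁ B.ρ₂ B.b B.k B.k₀ B.ℓ B.L φ ψ w t = B.stateNormSq (fields φ ψ w) t := by
  have hc (i : Fin 3) : Continuous (fields φ ψ w i) := (h i).continuous
  have hx (i : Fin 3) : Continuous (∂ₓ (fields φ ψ w i)) :=
    (contDiff_partialX (h i) (zero_add 1).le).continuous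
  have ht (i : Fin 3) : Continuous (∂ₜ (fields φ ψ w i)) :=
    (contDiff_partialT (h i) (zero_add 1).le).continuous
  unfold stateNormSq stateDensity
  iterate 5
    rw [intervalIntegral.integral_add (Continuous.intervalIntegrable (by fun_prop) _ _)
      (Continuous.intervalIntegrable (by fun_prop) _ _)]
  simp only [intervalIntegral.integral_const_mul]
  rfl

section

variable {φ ψ w : ℝ → ℝ → ℝ}

theorem residual_fields_zero (h : ∀ i, ContDiff ℝ 2 (fields φ ψ w i)) (x t : ℝ) :
    B.system.residual (fields φ ψ w) 0 (x, t)
      = B.k * deriv (fun y => deriv (fun y' => φ y' t) y + ψ y t + B.ℓ * w y t) x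
        + B.k₀ * B.ℓ * deriv (fun y => w y t) x - B.ρ₁ * deriv (deriv fun s => φ x s) t := by
  have hφx := (contDiff_partialX (h 0) one_add_one_eq_two.le).differentiable_one
  have hψ := (h 1).differentiable two_ne_zero
  have hw := (h 2).differentiable two_ne_zero
  have hshear := (((hasDerivAt_partialX hφx x t).fun_add (hasDerivAt_partialX hψ x t)).fun_add
    ((hasDerivAt_partialX hw x t).const_mul B.ℓ)).deriv
  trans B.k * (∂ₓ (∂ₓ (fields φ ψ w 0)) (x, t) + ∂ₓ (fields φ ψ w 1) (x, t)
    + B.ℓ * ∂ₓ (fields φ ψ w 2) (x, t)) + B.k₀ * B.ℓ * ∂ₓ (fields φ ψ w 2) (x, t)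
    - B.ρ₁ * ∂ₜ (∂ₜ (fields φ ψ w 0)) (x, t)
  · simp [SkewWaveSystem.residual, Fin.sum_univ_three]
    ring
  · rw [← hshear]
    rfl

theorem residual_fields_one (x t : ℝ) :
    B.system.residual (fields φ ψ w) 1 (x, t)
      = B.b * deriv (fun y => deriv (fun y' => ψ y' t) y) x - B.k * deriv (fun y => φ y t) x
        - B.ρ₂ * deriv (deriv fun s => ψ x s) t := by
  trans B.b * ∂ₓ (∂ₓ (fields φ ψ w 1)) (x, t) - B.k * ∂ₓ (fields φ ψ w 0) (x, t)
    - B.ρ₂ * ∂ₜ (∂ₜ (fields φ ψ w 1)) (x, t)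
  · simp [SkewWaveSystem.residual, Fin.sum_univ_three]
    ring
  · rfl

theorem residual_fields_two (h : ∀ i, ContDiff ℝ 2 (fields φ ψ w i)) (x t : ℝ) :
    B.system.residual (fields φ ψ w) 2 (x, t)
      = B.k₀ * deriv (fun y => deriv (fun y' => w y' t) y - B.ℓ * φ y t) x
        - B.k * B.ℓ * deriv (fun y => φ y t) x - B.ρ₁ * deriv (deriv fun s => w x s) t := by
  have hwx := (contDiff_partialX (h 2) one_add_one_eq_two.le).differentiable_one
  have hφ := (h 0).differentiable two_ne_zero
  have haxial := ((hasDerivAt_partialX hwx x t).fun_sub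
    ((hasDerivAt_partialX hφ x t).const_mul B.ℓ)).deriv
  trans B.k₀ * (∂ₓ (∂ₓ (fields φ ψ w 2)) (x, t) - B.ℓ * ∂ₓ (fields φ ψ w 0) (x, t))
    - B.k * B.ℓ * ∂ₓ (fields φ ψ w 0) (x, t) - B.ρ₁ * ∂ₜ (∂ₜ (fields φ ψ w 2)) (x, t)
  · simp [SkewWaveSystem.residual, Fin.sum_univ_three]
    ring
  · rw [← haxial]
    rfl

theorem isSemilinearWave_fields {a₁ a₂ a₃ g₁ g₂ g₃ : ℝ → ℝ} {f₁ f₂ f₃ : ℝ → ℝ → ℝ → ℝ}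
    (h : IsBresseSolutionInfty 2 B.ρ₁ B.ρ₂ B.k B.k₀ B.b B.ℓ B.L a₁ a₂ a₃ g₁ g₂ g₃ f₁ f₂ f₃
      φ ψ w) :
    B.system.IsSemilinearWave ![a₁, a₂, a₃] ![g₁, g₂, g₃] (B.force f₁ f₂ f₃)
      (fields φ ψ w) := by
  obtain ⟨hφ, hψ, hw, hboundary, heq⟩ := h
  have hcontDiff (i : Fin 3) : ContDiff ℝ 2 (fields φ ψ w i) := by
    fin_cases i
    exacts [hφ, hψ, hw]
  refine ⟨hcontDiff, fun i t ht => ?_, fun i t ht => ?_, fun i x hx t ht => ?_⟩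
  · obtain ⟨hφ₀, -, hψ₀, -, hw₀, -⟩ := hboundary t ht
    fin_cases i
    exacts [hφ₀, hψ₀, hw₀]
  · obtain ⟨-, hφL, -, hψL, -, hwL⟩ := hboundary t ht
    fin_cases i
    exacts [hφL, hψL, hwL]
  · obtain ⟨hφ_eq, hψ_eq, hw_eq⟩ := heq x hx t ht
    fin_cases i
    · refine (residual_fields_zero hcontDiff x t).trans ?_
      change _ = a₁ x * g₁ (deriv (fun s => φ x s) t)
        + (B.k₀ * B.ℓ ^ 2 * φ x t + f₁ (φ x t) (ψ x t) (w x t))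
      linarith
    · refine (residual_fields_one x t).trans ?_
      change _ = a₂ x * g₂ (deriv (fun s => ψ x s) t)
        + (B.k * (ψ x t + B.ℓ * w x t) + f₂ (φ x t) (ψ x t) (w x t))
      linarith
    · refine (residual_fields_two hcontDiff x t).trans ?_
      change _ = a₃ x * g₃ (deriv (fun s => w x s) t)
        + (B.k * B.ℓ * (ψ x t + B.ℓ * w x t) + f₃ (φ x t) (ψ x t) (w x t))
      linarith

end

theorem lpNormSq_fields_sub (p : ℝ) (φ₁ ψ₁ w₁ φ₂ ψ₂ w₂ : ℝ → ℝ → ℝ) :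
    B.system.lpNormSq p (fields φ₁ ψ₁ w₁ - fields φ₂ ψ₂ w₂) = fun σ =>
      (∫ x in (0 : ℝ)..B.L, |φ₁ x σ - φ₂ x σ| ^ (2 * p)) ^ (1 / p)
        + (∫ x in (0 : ℝ)..B.L, |ψ₁ x σ - ψ₂ x σ| ^ (2 * p)) ^ (1 / p)
        + (∫ x in (0 : ℝ)..B.L, |w₁ x σ - w₂ x σ| ^ (2 * p)) ^ (1 / p) :=
  funext fun _ => Fin.sum_univ_three _

end BresseCoefficients

open BresseCoefficients in
theorem stmt_19_general (ρ₁ ρ₂ k k₀ b ℓ L : ℝ)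
    (hρ₁ : 0 < ρ₁) (hρ₂ : 0 < ρ₂) (hk : 0 < k) (hk₀ : 0 < k₀) (hb : 0 < b) (hL : 0 < L)
    (f₁ f₂ f₃ : ℝ → ℝ → ℝ → ℝ) (p : ℝ) (hp : 1 ≤ p)
    (hf₁ : LocallyLipschitz fun z : ℝ × ℝ × ℝ => f₁ z.1 z.2.1 z.2.2)
    (hf₂ : LocallyLipschitz fun z : ℝ × ℝ × ℝ => f₂ z.1 z.2.1 z.2.2)
    (hf₃ : LocallyLipschitz fun z : ℝ × ℝ × ℝ => f₃ z.1 z.2.1 z.2.2)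
    (a₁ a₂ a₃ g₁ g₂ g₃ : ℝ → ℝ) (W : Set ℝ) (hW : IsOpen W) (hne : W.Nonempty)
    (hWL : W ⊆ Icc 0 L) (h₁ : IsLocalizedDamping L W a₁ g₁)
    (h₂ : IsLocalizedDamping L W a₂ g₂) (h₃ : IsLocalizedDamping L W a₃ g₃) (R : ℝ) :
    ∃ c₁ ω : ℝ, 0 < c₁ ∧ 0 < ω ∧
      ∀ φ₁ ψ₁ w₁ φ₂ ψ₂ w₂ : ℝ → ℝ → ℝ,
        IsBresseSolutionInfty 2 ρ₁ ρ₂ k k₀ b ℓ L a₁ a₂ a₃ g₁ g₂ g₃ f₁ f₂ f₃ φ₁ ψ₁ w₁ →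
        IsBresseSolutionInfty 2 ρ₁ ρ₂ k k₀ b ℓ L a₁ a₂ a₃ g₁ g₂ g₃ f₁ f₂ f₃ φ₂ ψ₂ w₂ →
        (∀ t ∈ Ici (0 : ℝ), √(HnormSq ρ₁ ρ₂ b k k₀ ℓ L φ₁ ψ₁ w₁ t) ≤ R) →
        (∀ t ∈ Ici (0 : ℝ), √(HnormSq ρ₁ ρ₂ b k k₀ ℓ L φ₂ ψ₂ w₂ t) ≤ R) →
        ∀ t ∈ Ici (0 : ℝ),
          HnormSq ρ₁ ρ₂ b k k₀ ℓ L (fun x s => φ₁ x s - φ₂ x s) (fun x s => ψ₁ x s - ψ₂ x s)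
              (fun x s => w₁ x s - w₂ x s) t
            ≤ c₁ * Real.exp (-ω * t) *
                HnormSq ρ₁ ρ₂ b k k₀ ℓ L (fun x s => φ₁ x s - φ₂ x s)
                  (fun x s => ψ₁ x s - ψ₂ x s) (fun x s => w₁ x s - w₂ x s) 0
              + c₁ * sSup ((fun σ =>
                  (∫ x in (0 : ℝ)..L, |φ₁ x σ - φ₂ x σ| ^ (2 * p)) ^ (1 / p)
                  + (∫ x in (0 : ℝ)..L, |ψ₁ x σ - ψ₂ x σ| ^ (2 * p)) ^ (1 / p)
                  + (∫ x in (0 : ℝ)..L, |w₁ x σ - w₂ x σ| ^ (2 * p)) ^ (1 / p)) '' Icc 0 t) := by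
  let B : BresseCoefficients := ⟨ρ₁, ρ₂, k, k₀, b, ℓ, L, hρ₁, hρ₂, hk, hk₀, hb, hL⟩
  have hdamping (i : Fin 3) :
      IsLocalizedDamping B.L W (![a₁, a₂, a₃] i) (![g₁, g₂, g₃] i) := by
    fin_cases i
    exacts [h₁, h₂, h₃]
  obtain ⟨c, ω, hc, hω, hstable⟩ := B.exists_quasistability hW hne hWL hdamping
    (B.locallyLipschitz_force hf₁ hf₂ hf₃) hp (R ^ 2)
  refine ⟨c, ω, hc, hω, fun φ₁ ψ₁ w₁ φ₂ ψ₂ w₂ hZ₁ hZ₂ hR₁ hR₂ t ht => ?_⟩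
  have hu := B.isSemilinearWave_fields hZ₁
  have hv := B.isSemilinearWave_fields hZ₂
  have hu₁ (i : Fin 3) := (hu.contDiff i).of_le one_le_two
  have hv₁ (i : Fin 3) := (hv.contDiff i).of_le one_le_two
  have hstate := hstable _ _ hu hv
    (fun s hs => by
      rw [← hnormSq_eq_stateNormSq hu₁]
      exact (Real.sqrt_le_iff.1 (hR₁ s hs)).2)
    (fun s hs => by
      rw [← hnormSq_eq_stateNormSq hv₁]
      exact (Real.sqrt_le_iff.1 (hR₂ s hs)).2) t ht
  rw [lpNormSq_fields_sub, ← fields_sub] at hstate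
  have hd₁ (i : Fin 3) : ContDiff ℝ 1 (fields (fun x s => φ₁ x s - φ₂ x s)
      (fun x s => ψ₁ x s - ψ₂ x s) (fun x s => w₁ x s - w₂ x s) i) := by
    rw [fields_sub]
    exact (hu₁ i).sub (hv₁ i)
  rwa [← hnormSq_eq_stateNormSq hd₁, ← hnormSq_eq_stateNormSq hd₁] at hstate

end

/-- Quasi-stability estimate. Under assumptions `(f.1)–(a.1)` of
the paper (`fᵢ ∈ C¹(ℝ³)` with `|∇fᵢ| ≤ c_f(1+|u|^{p−1}+|v|^{p−1}+|w|^{p−1})`;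
`gᵢ ∈ C¹` increasing, `gᵢ(0)=0`, `m ≤ gᵢ' ≤ M`; `aᵢ ∈ L^∞` nonnegative with
`aᵢ ≥ a₀ > 0` on open intervals `Iᵢ` having nonempty intersection), for any
`R > 0` there exist `c₁, ω > 0`, depending only on `R` and the data, such that for
any two `C²` solutions `Z¹, Z²` on `[0,L]×[0,∞)` with `∥Zⁱ(t)∥_H ≤ R` for all
`t ≥ 0`, the differences `φ̃, ψ̃, w̃` satisfy for all `t ≥ 0`:
`∥Z¹(t) − Z²(t)∥²_H ≤ c₁e^{−ωt}∥Z¹(0) − Z²(0)∥²_H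
  + c₁ sup_{σ∈[0,t]} (∥φ̃(σ)∥²_{L^{2p}} + ∥ψ̃(σ)∥²_{L^{2p}} + ∥w̃(σ)∥²_{L^{2p}})`,
where `∥u∥²_{L^{2p}(0,L)} = (∫₀^L |u|^{2p})^{1/p}`. -/
theorem stmt_19 (ρ₁ ρ₂ k k₀ b ℓ L : ℝ)
    (hρ₁ : 0 < ρ₁) (hρ₂ : 0 < ρ₂) (hk : 0 < k) (hk₀ : 0 < k₀) (hb : 0 < b)
    (hℓ : 0 < ℓ) (hL : 0 < L)
    (f₁ f₂ f₃ : ℝ → ℝ → ℝ → ℝ) (c_f pexp : ℝ) (hcf : 0 < c_f) (hp : 1 ≤ pexp)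
    (hf₁ : ContDiff ℝ 1 (fun z : ℝ × ℝ × ℝ => f₁ z.1 z.2.1 z.2.2))
    (hf₂ : ContDiff ℝ 1 (fun z : ℝ × ℝ × ℝ => f₂ z.1 z.2.1 z.2.2))
    (hf₃ : ContDiff ℝ 1 (fun z : ℝ × ℝ × ℝ => f₃ z.1 z.2.1 z.2.2))
    (hdf₁ : ∀ z : ℝ × ℝ × ℝ, ‖fderiv ℝ (fun q : ℝ × ℝ × ℝ => f₁ q.1 q.2.1 q.2.2) z‖
      ≤ c_f * (1 + |z.1| ^ (pexp - 1) + |z.2.1| ^ (pexp - 1) + |z.2.2| ^ (pexp - 1)))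
    (hdf₂ : ∀ z : ℝ × ℝ × ℝ, ‖fderiv ℝ (fun q : ℝ × ℝ × ℝ => f₂ q.1 q.2.1 q.2.2) z‖
      ≤ c_f * (1 + |z.1| ^ (pexp - 1) + |z.2.1| ^ (pexp - 1) + |z.2.2| ^ (pexp - 1)))
    (hdf₃ : ∀ z : ℝ × ℝ × ℝ, ‖fderiv ℝ (fun q : ℝ × ℝ × ℝ => f₃ q.1 q.2.1 q.2.2) z‖
      ≤ c_f * (1 + |z.1| ^ (pexp - 1) + |z.2.1| ^ (pexp - 1) + |z.2.2| ^ (pexp - 1)))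
    (g₁ g₂ g₃ : ℝ → ℝ) (m M : ℝ) (hm : 0 < m) (hmM : m ≤ M)
    (hg₁ : ContDiff ℝ 1 g₁ ∧ Monotone g₁ ∧ g₁ 0 = 0 ∧
      ∀ s, m ≤ deriv g₁ s ∧ deriv g₁ s ≤ M)
    (hg₂ : ContDiff ℝ 1 g₂ ∧ Monotone g₂ ∧ g₂ 0 = 0 ∧
      ∀ s, m ≤ deriv g₂ s ∧ deriv g₂ s ≤ M)
    (hg₃ : ContDiff ℝ 1 g₃ ∧ Monotone g₃ ∧ g₃ 0 = 0 ∧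
      ∀ s, m ≤ deriv g₃ s ∧ deriv g₃ s ≤ M)
    (a₁ a₂ a₃ : ℝ → ℝ) (a₀ : ℝ) (ha₀ : 0 < a₀)
    (α₁ β₁ α₂ β₂ α₃ β₃ : ℝ)
    (hI₁ : Set.Ioo α₁ β₁ ⊆ Set.Icc (0:ℝ) L)
    (hI₂ : Set.Ioo α₂ β₂ ⊆ Set.Icc (0:ℝ) L)
    (hI₃ : Set.Ioo α₃ β₃ ⊆ Set.Icc (0:ℝ) L)
    (ha₁ : Measurable a₁ ∧ (∀ x, 0 ≤ a₁ x) ∧ (∃ A, ∀ x, a₁ x ≤ A) ∧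
      ∀ x ∈ Set.Ioo α₁ β₁, a₀ ≤ a₁ x)
    (ha₂ : Measurable a₂ ∧ (∀ x, 0 ≤ a₂ x) ∧ (∃ A, ∀ x, a₂ x ≤ A) ∧
      ∀ x ∈ Set.Ioo α₂ β₂, a₀ ≤ a₂ x)
    (ha₃ : Measurable a₃ ∧ (∀ x, 0 ≤ a₃ x) ∧ (∃ A, ∀ x, a₃ x ≤ A) ∧
      ∀ x ∈ Set.Ioo α₃ β₃, a₀ ≤ a₃ x)
    (hint : (Set.Ioo α₁ β₁ ∩ Set.Ioo α₂ β₂ ∩ Set.Ioo α₃ β₃).Nonempty)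
    (R : ℝ) (hR : 0 < R) :
    ∃ c₁ ω : ℝ, 0 < c₁ ∧ 0 < ω ∧
      ∀ φ₁' ψ₁' w₁' φ₂' ψ₂' w₂' : ℝ → ℝ → ℝ,
        IsBresseSolutionInfty 2 ρ₁ ρ₂ k k₀ b ℓ L a₁ a₂ a₃ g₁ g₂ g₃ f₁ f₂ f₃
          φ₁' ψ₁' w₁' →
        IsBresseSolutionInfty 2 ρ₁ ρ₂ k k₀ b ℓ L a₁ a₂ a₃ g₁ g₂ g₃ f₁ f₂ f₃
          φ₂' ψ₂' w₂' →
        (∀ t ∈ Set.Ici (0:ℝ),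
          Real.sqrt (HnormSq ρ₁ ρ₂ b k k₀ ℓ L φ₁' ψ₁' w₁' t) ≤ R) →
        (∀ t ∈ Set.Ici (0:ℝ),
          Real.sqrt (HnormSq ρ₁ ρ₂ b k k₀ ℓ L φ₂' ψ₂' w₂' t) ≤ R) →
        ∀ t ∈ Set.Ici (0:ℝ),
          HnormSq ρ₁ ρ₂ b k k₀ ℓ L
              (fun x s => φ₁' x s - φ₂' x s)
              (fun x s => ψ₁' x s - ψ₂' x s)
              (fun x s => w₁' x s - w₂' x s) t
            ≤ c₁ * Real.exp (-ω * t) *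
                HnormSq ρ₁ ρ₂ b k k₀ ℓ L
                  (fun x s => φ₁' x s - φ₂' x s)
                  (fun x s => ψ₁' x s - ψ₂' x s)
                  (fun x s => w₁' x s - w₂' x s) 0
              + c₁ * sSup ((fun σ =>
                  (∫ x in (0:ℝ)..L, |φ₁' x σ - φ₂' x σ| ^ (2 * pexp)) ^ (1 / pexp)
                  + (∫ x in (0:ℝ)..L, |ψ₁' x σ - ψ₂' x σ| ^ (2 * pexp)) ^ (1 / pexp)
                  + (∫ x in (0:ℝ)..L, |w₁' x σ - w₂' x σ| ^ (2 * pexp)) ^ (1 / pexp))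
                '' Set.Icc 0 t) := by
  exact stmt_19_general ρ₁ ρ₂ k k₀ b ℓ L hρ₁ hρ₂ hk hk₀ hb hL f₁ f₂ f₃ pexp hp
    hf₁.locallyLipschitz hf₂.locallyLipschitz hf₃.locallyLipschitz a₁ a₂ a₃ g₁ g₂ g₃ _
    ((isOpen_Ioo.inter isOpen_Ioo).inter isOpen_Ioo) hint (fun x hx => hI₁ hx.1.1)
    ⟨fun x _ => ha₁.2.1 x, ha₁.2.2.1.imp fun _ hA x _ => hA x,
      ⟨a₀, ha₀, fun x hx => ha₁.2.2.2 x hx.1.1⟩, hg₁.1.differentiable_one, m, M, hm, hg₁.2.2.2⟩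
    ⟨fun x _ => ha₂.2.1 x, ha₂.2.2.1.imp fun _ hA x _ => hA x,
      ⟨a₀, ha₀, fun x hx => ha₂.2.2.2 x hx.1.2⟩, hg₂.1.differentiable_one, m, M, hm, hg₂.2.2.2⟩
    ⟨fun x _ => ha₃.2.1 x, ha₃.2.2.1.imp fun _ hA x _ => hA x,
      ⟨a₀, ha₀, fun x hx => ha₃.2.2.2 x hx.2⟩, hg₃.1.differentiable_one, m, M, hm, hg₃.2.2.2⟩ R
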